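/- arXiv:1111.3890 — 5 statements merged into one kernel-verified Lean document; each statement's English description precedes it below -/
import Mathlib

section
/- Let (R,S,P,Q,φ,ψ) be a Morita context over k and M an (R,R)-bimodule with symmetric k-action. Then the composite γ_• ∘ θ_• is chain homotopic to the identity via the explicit homotopy h_•: one has b ∘ h_0 = γ_0 ∘ θ_0 − id on C_0(R,M), and b ∘ h_n + h_{n−1} ∘ b = γ_n ∘ θ_n − id on C_n(R,M) for every n ≥ 1. -/
open scoped TensorProduct
open MulOpposite

universe u

/-- The `k`-submodule of balancing relations `(m·a) ⊗ n − m ⊗ (a·n)` inside `M ⊗[k] N`,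
for a `k`-algebra `A`, a right `A`-module `M` and a left `A`-module `N`.  The balanced
tensor product `M ⊗_A N` is the quotient of `M ⊗[k] N` by this submodule. -/
def midRel (k A M N : Type u) [CommRing k] [Ring A] [Algebra k A]
    [AddCommGroup M] [Module k M] [Module Aᵐᵒᵖ M]
    [AddCommGroup N] [Module k N] [Module A N] :
    Submodule k (TensorProduct k M N) :=
  Submodule.span k {x | ∃ (m : M) (a : A) (n : N),
    x = (op a • m) ⊗ₜ[k] n - m ⊗ₜ[k] (a • n)}

/-- A Morita context `(R, S, P, Q, φ, ψ)` over the commutative ground ring `k`: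
`P` is an `(S,R)`-bimodule and `Q` an `(R,S)`-bimodule (both with symmetric `k`-action,
right actions being encoded as left actions of the opposite algebras), and `φ` and `ψ` are
`k`-bilinear pairings `P × Q → S` and `Q × P → R` which descend to bimodule isomorphisms
`φ : P ⊗_R Q ≅ S` and `ψ : Q ⊗_S P ≅ R` on the balanced tensor products:  the lifted maps on
`P ⊗[k] Q` resp. `Q ⊗[k] P` are surjective and their kernels are exactly the corresponding
submodules of balancing relations (so that the induced maps on the quotients realizing
`P ⊗_R Q` and `Q ⊗_S P` are well defined bijections); moreover the compatibilities
`φ(p ⊗ q)·p' = p·ψ(q ⊗ p')` and `ψ(q ⊗ p)·q' = q·φ(p ⊗ q')` hold. -/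
structure MoritaContext (k R S P Q : Type u) [CommRing k] [Ring R] [Ring S]
    [Algebra k R] [Algebra k S]
    [AddCommGroup P] [Module k P] [Module S P] [Module Rᵐᵒᵖ P]
    [SMulCommClass S Rᵐᵒᵖ P] [IsScalarTower k S P] [IsScalarTower k Rᵐᵒᵖ P]
    [AddCommGroup Q] [Module k Q] [Module R Q] [Module Sᵐᵒᵖ Q]
    [SMulCommClass R Sᵐᵒᵖ Q] [IsScalarTower k R Q] [IsScalarTower k Sᵐᵒᵖ Q] : Type u where
  φ : P →ₗ[k] Q →ₗ[k] S
  ψ : Q →ₗ[k] P →ₗ[k] R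
  φ_ker : LinearMap.ker (TensorProduct.lift φ) = midRel k R P Q
  φ_surj : Function.Surjective (TensorProduct.lift φ)
  ψ_ker : LinearMap.ker (TensorProduct.lift ψ) = midRel k S Q P
  ψ_surj : Function.Surjective (TensorProduct.lift ψ)
  φ_left : ∀ (s : S) (p : P) (q : Q), φ (s • p) q = s * φ p q
  φ_right : ∀ (s : S) (p : P) (q : Q), φ p (op s • q) = φ p q * s
  ψ_left : ∀ (r : R) (q : Q) (p : P), ψ (r • q) p = r * ψ q p
  ψ_right : ∀ (r : R) (q : Q) (p : P), ψ q (op r • p) = ψ q p * r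
  assoc_φψ : ∀ (p : P) (q : Q) (p' : P), φ p q • p' = op (ψ q p') • p
  assoc_ψφ : ∀ (q : Q) (p : P) (q' : Q), ψ q p • q' = op (φ p q') • q

section Hochschild

variable (k : Type u) [CommRing k]

/-- The `n`-th Hochschild chain module `C_n(A, N) = N ⊗_k A^{⊗_k n}`. -/
abbrev HChain (A N : Type u) [Ring A] [Algebra k A] [AddCommGroup N] [Module k N]
    (n : ℕ) :=
  N ⊗[k] (PiTensorProduct k (fun _ : Fin n => A))

/-- The generator `m ⊗ r₁ ⊗ ⋯ ⊗ rₙ` of `C_n(A, N)`. -/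
noncomputable def hgen {A N : Type u} [Ring A] [Algebra k A] [AddCommGroup N] [Module k N]
    {n : ℕ} (m : N) (r : Fin n → A) : HChain k A N n :=
  m ⊗ₜ[k] PiTensorProduct.tprod k r

/-- The tuple obtained from the tuple `r` of length `n + 1` by multiplying the entries at
the (0-based) positions `j` and `j + 1` (all other entries are kept, in their order). -/
def mergeAt {A : Type u} [Mul A] {n : ℕ} (r : Fin (n + 1) → A) (j : Fin n) : Fin n → A :=
  fun l =>
    if l.val < j.val then r l.castSucc
    else if l.val = j.val then r l.castSucc * r l.succ
    else r l.succ

end Hochschild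

/-!
Put `w (i, j) = (ψ(qᵢ ⊗ p'ⱼ), ψ(q'ⱼ ⊗ pᵢ)) = (uₐ, vₐ)` for `a = (i, j)`. The Morita relations give
`∑ₐ uₐ vₐ = 1` in `R`, and turn `γ ∘ θ` into
`m ⊗ r₁ ⊗ ⋯ ⊗ rₙ ↦ ∑ vₐₙ m uₐ₀ ⊗ vₐ₀ r₁ uₐ₁ ⊗ ⋯ ⊗ vₐₙ₋₁ rₙ uₐₙ`.
The summand `h_t` of the homotopy keeps only `m uₐ₀ ⊗ vₐ₀ r₁ uₐ₁ ⊗ ⋯ ⊗ vₐₜ₋₁ r_t uₐₜ` of this and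
continues with `vₐₜ ⊗ r_{t+1} ⊗ ⋯ ⊗ rₙ`. A face of `h_t` that brings some `uₐ` and `vₐ` next to each
other allows the sum over `a` to be carried out, so the `h_t` satisfy the identities of a
presimplicial homotopy from the identity to `γ ∘ θ`; everything else cancels in the alternating sum.
-/

theorem neg_one_pow_mul_neg_one_pow_succ {A : Type*} [Monoid A] [HasDistribNeg A] (n i t : ℕ) :
    (-1 : A) ^ (n + t) * (-1) ^ (n + 1 + i) = -(-1) ^ (i + t) := by
  rw [← pow_add, show n + t + (n + 1 + i) = 2 * n + (i + t) + 1 by ring, pow_succ, pow_add, pow_mul]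
  simp

theorem sum_range_succ_sum_range_succ {B : Type*} [AddCommMonoid B] (f : ℕ → ℕ → B) (m n : ℕ) :
    ∑ i ∈ Finset.range (m + 1), ∑ t ∈ Finset.range (n + 1), f i t
      = ∑ i ∈ Finset.range m, ∑ t ∈ Finset.range n, f i t + ∑ i ∈ Finset.range m, f i n
        + ∑ t ∈ Finset.range (n + 1), f m t := by
  simp_rw [Finset.sum_range_succ _ m, Finset.sum_range_succ (f _) n, Finset.sum_add_distrib]

/-- Read `A i t` as `dᵢ hₜ` and `H t i` as `hₜ dᵢ`. -/
theorem alternating_sum_of_presimplicial_homotopy {B : Type*} [AddCommGroup B] (N : ℕ)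
    (A H : ℕ → ℕ → B)
    (hle : ∀ i t, i ≤ t → t < N → A i (t + 1) = H t i)
    (hdiag : ∀ t < N, A (t + 1) (t + 1) = A (t + 1) t)
    (hgt : ∀ i t, t < i → i ≤ N → A (i + 1) t = H t i) :
    ∑ i ∈ Finset.range (N + 2), ∑ t ∈ Finset.range (N + 1), (-1 : ℤ) ^ (i + t) • A i t
      + ∑ i ∈ Finset.range (N + 1), ∑ t ∈ Finset.range N, (-1 : ℤ) ^ (i + t) • H t i
      = A 0 0 - A (N + 1) N := by
  induction N with
  | zero => simp [Finset.sum_range_succ, sub_eq_add_neg]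
  | succ N ih =>
    have column : ∑ i ∈ Finset.range (N + 2), (-1 : ℤ) ^ (i + (N + 1)) • A i (N + 1)
        = A (N + 1) N - ∑ i ∈ Finset.range (N + 1), (-1 : ℤ) ^ (i + N) • H N i := by
      rw [Finset.sum_range_succ, hdiag N (by omega), Even.neg_one_pow ⟨N + 1, rfl⟩, one_smul,
        add_comm, sub_eq_add_neg, ← Finset.sum_neg_distrib]
      refine congrArg _ (Finset.sum_congr rfl fun i hi => ?_)
      rw [hle i N (by grind) (by omega), ← add_assoc, pow_succ, mul_neg_one, neg_smul]
    have row : ∑ t ∈ Finset.range (N + 1), (-1 : ℤ) ^ (N + 2 + t) • A (N + 2) t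
        = -∑ t ∈ Finset.range (N + 1), (-1 : ℤ) ^ (N + 1 + t) • H t (N + 1) := by
      rw [← Finset.sum_neg_distrib]
      refine Finset.sum_congr rfl fun t ht => ?_
      rw [hgt (N + 1) t (by grind) le_rfl, add_right_comm, pow_succ, mul_neg_one, neg_smul,
        add_right_comm]
    have corner : (-1 : ℤ) ^ (N + 2 + (N + 1)) • A (N + 2) (N + 1) = -A (N + 2) (N + 1) := by
      rw [Odd.neg_one_pow ⟨N + 1, by ring⟩, neg_one_smul]
    have inner := ih (fun i t hi ht => hle i t hi (by omega)) (fun t ht => hdiag t (by omega))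
      fun i t ht hi => hgt i t ht (by omega)
    rw [sum_range_succ_sum_range_succ (fun i t => (-1 : ℤ) ^ (i + t) • A i t),
      sum_range_succ_sum_range_succ (fun i t => (-1 : ℤ) ^ (i + t) • H t i), column,
      Finset.sum_range_succ (fun t => (-1 : ℤ) ^ (N + 2 + t) • A (N + 2) t), row, corner,
      eq_sub_of_add_eq inner]
    abel

theorem sum_sum_pi_eq_sum_pi_prod {ι κ B : Type*} [AddCommMonoid B] [Fintype ι] [Fintype κ]
    (n : ℕ) (F : (Fin n → ι) → (Fin n → κ) → B) :
    ∑ f : Fin n → ι, ∑ g : Fin n → κ, F f g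
      = ∑ c : Fin n → ι × κ, F (Prod.fst ∘ c) (Prod.snd ∘ c) := by
  rw [← Fintype.sum_prod_type', ← (Equiv.arrowProdEquivProdArrow (Fin n) _ _).sum_comp]
  rfl

namespace MoritaContext

variable {k R S P Q : Type u} [CommRing k] [Ring R] [Ring S] [Algebra k R] [Algebra k S]
  [AddCommGroup P] [Module k P] [Module S P] [Module Rᵐᵒᵖ P]
  [SMulCommClass S Rᵐᵒᵖ P] [IsScalarTower k S P] [IsScalarTower k Rᵐᵒᵖ P]
  [AddCommGroup Q] [Module k Q] [Module R Q] [Module Sᵐᵒᵖ Q]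
  [SMulCommClass R Sᵐᵒᵖ Q] [IsScalarTower k R Q] [IsScalarTower k Sᵐᵒᵖ Q]
  (ctx : MoritaContext k R S P Q)

theorem ψ_φ_smul (q q' : Q) (p p' : P) :
    ctx.ψ q (ctx.φ p q' • p') = ctx.ψ q p * ctx.ψ q' p' := by
  rw [ctx.assoc_φψ, ctx.ψ_right]

theorem sum_ψ_mul_ψ {ι κ : Type*} [Fintype ι] [Fintype κ] {pI : ι → P} {qI : ι → Q}
    {pJ : κ → P} {qJ : κ → Q} (hI : ∑ i, ctx.ψ (qI i) (pI i) = 1)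
    (hJ : ∑ j, ctx.φ (pJ j) (qJ j) = 1) :
    ∑ a : ι × κ, ctx.ψ (qI a.1) (pJ a.2) * ctx.ψ (qJ a.2) (pI a.1) = 1 := by
  simp_rw [Fintype.sum_prod_type, ← ψ_φ_smul, ← map_sum, ← Finset.sum_smul, hJ, one_smul, hI]

end MoritaContext

section Sequences

variable {X : Type*}

theorem extend_val_of_lt {n l : ℕ} (r : Fin n → X) (d : ℕ → X) (hl : l < n) :
    Function.extend Fin.val r d l = r ⟨l, hl⟩ :=
  Fin.val_injective.extend_apply r d ⟨l, hl⟩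

theorem extend_val_of_le {n l : ℕ} (r : Fin n → X) (d : ℕ → X) (hl : n ≤ l) :
    Function.extend Fin.val r d l = d l :=
  Function.extend_apply' r d l <| by
    rintro ⟨j, rfl⟩
    exact absurd j.isLt hl.not_gt

/-- The sequence `s₀, …, s_{i-1}, a, s_i, s_{i+1}, …` obtained from `s` by inserting `a` at
position `i`; the counterpart of `Fin.insertNth` for infinite sequences. -/
def insertAt (i : ℕ) (a : X) (s : ℕ → X) : ℕ → X :=
  fun l => if l < i then s l else if l = i then a else s (l - 1)

theorem extend_val_insertNth [Zero X] {n : ℕ} (i : Fin (n + 1)) (a : X) (r : Fin n → X) :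
    Function.extend Fin.val (i.insertNth a r : Fin (n + 1) → X) 0
      = insertAt i a (Function.extend Fin.val r 0) := by
  funext l
  rcases lt_or_ge l (n + 1) with hl | hl
  · rw [extend_val_of_lt _ _ hl]
    unfold insertAt
    split_ifs with hlt heq
    · rw [Fin.insertNth_apply_below (Fin.lt_def.2 hlt), eq_rec_constant,
        extend_val_of_lt _ _ (by omega)]
      rfl
    · simp [heq]
    · have hgt : (i : ℕ) < l := by omega
      rw [Fin.insertNth_apply_above (Fin.lt_def.2 hgt), eq_rec_constant,
        extend_val_of_lt _ _ (by omega)]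
      rfl
  · rw [extend_val_of_le _ _ hl, insertAt, if_neg (by omega), if_neg (by omega),
      extend_val_of_le _ _ (by omega)]
    rfl

variable {α B : Type*} [Fintype α] [Zero X] [AddCommMonoid B]

/-- The iterated sum `∑ F(w a₀, …, w aₜ₋₁)` over all words `a₀ ⋯ aₜ₋₁` in the alphabet `α`, where
`F` is a function of sequences and words are padded by `0`. -/
noncomputable def wordSum (w : α → X) (t : ℕ) (F : (ℕ → X) → B) : B :=
  ∑ c : Fin t → α, F (Function.extend Fin.val (w ∘ c) 0)

theorem wordSum_succ (w : α → X) {t i : ℕ} (hi : i ≤ t) (F : (ℕ → X) → B) :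
    wordSum w (t + 1) F = wordSum w t fun W => ∑ a, F (insertAt i (w a) W) := by
  have comp_insertNth (j : Fin (t + 1)) (a : α) (c : Fin t → α) :
      w ∘ (j.insertNth a c : Fin (t + 1) → α) = j.insertNth (w a) (w ∘ c) := by
    funext l
    cases l using j.succAboveCases <;> simp
  unfold wordSum
  rw [← (Fin.insertNthEquiv (fun _ => α) ⟨i, Nat.lt_succ_of_le hi⟩).sum_comp,
    Fintype.sum_prod_type_right]
  simp [Fin.insertNthEquiv, comp_insertNth, extend_val_insertNth]

end Sequences

namespace HChain

variable {k R M : Type u} [CommRing k] [Ring R] [Algebra k R] [AddCommGroup M] [Module k M]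

/-- The generator `m ⊗ s₀ ⊗ ⋯ ⊗ sₙ₋₁` of `C_n(R, M)` given by an element `m` and an infinite
sequence `s`. Sequences make the entries of a chain accessible by natural numbers, whatever its
degree. -/
noncomputable def ofSeq (k : Type u) {R M : Type u} [CommRing k] [Ring R] [Algebra k R]
    [AddCommGroup M] [Module k M] (n : ℕ) (x : M × (ℕ → R)) : HChain k R M n :=
  hgen k x.1 fun l : Fin n => x.2 l

theorem hom_ext_ofSeq {n : ℕ} {B : Type*} [AddCommMonoid B] [Module k B]
    {f g : HChain k R M n →ₗ[k] B} (hfg : ∀ x, f (ofSeq k n x) = g (ofSeq k n x)) : f = g := by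
  refine TensorProduct.ext (LinearMap.ext fun m => PiTensorProduct.ext
    (MultilinearMap.ext fun r => ?_))
  simpa [ofSeq, hgen, Fin.val_injective.extend_apply] using
    hfg (m, Function.extend Fin.val r 0)

section Contraction

variable {α : Type*} [Fintype α] {w : α → R × R}

theorem sum_ofSeq_update (hw : ∑ a, (w a).1 * (w a).2 = 1) {n i : ℕ} (hi : i < n) (m : M)
    {s : ℕ → R} {b c : R} (hs : s i = b * c) :
    ∑ a, ofSeq k n (m, Function.update s i (b * ((w a).1 * (w a).2) * c)) = ofSeq k n (m, s) := by
  have ofSeq_update (y : R) : ofSeq k n (m, Function.update s i y)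
      = m ⊗ₜ[k] PiTensorProduct.tprod k
        (Function.update (fun l : Fin n => s l) ⟨i, hi⟩ y) := by
    unfold ofSeq hgen
    congr 2
    funext l
    simp [Function.update_apply, Fin.ext_iff]
  simp_rw [ofSeq_update, ← TensorProduct.tmul_sum, ← MultilinearMap.map_update_sum,
    ← Finset.sum_mul, ← Finset.mul_sum, hw, mul_one, ← ofSeq_update, ← hs, Function.update_eq_self]

variable [Module Rᵐᵒᵖ M]

theorem sum_ofSeq_smul (hw : ∑ a, (w a).1 * (w a).2 = 1) (n : ℕ) (m : M) (s : ℕ → R) (c : R) :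
    ∑ a, ofSeq k n (op ((w a).1 * (w a).2 * c) • m, s) = ofSeq k n (op c • m, s) := by
  simp_rw [ofSeq, hgen, ← TensorProduct.sum_tmul, ← Finset.sum_smul, ← Finset.op_sum,
    ← Finset.sum_mul, hw, one_mul]

end Contraction

/-- The element `m·U₀ ⊗ V₀ s₀ U₁ ⊗ ⋯ ⊗ Vₜ₋₁ sₜ₋₁ Uₜ ⊗ Vₜ ⊗ sₜ ⊗ sₜ₊₁ ⊗ ⋯`, for
`x = m ⊗ s₀ ⊗ s₁ ⊗ ⋯` and `W = (U, V)`: a summand of the homotopy `h`. -/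
def twist [SMul Rᵐᵒᵖ M] (t : ℕ) (W : ℕ → R × R) (x : M × (ℕ → R)) : M × (ℕ → R) :=
  (op (W 0).1 • x.1, fun l =>
    if l < t then (W l).2 * x.2 l * (W (l + 1)).1 else if l = t then (W t).2 else x.2 (l - 1))

/-- The element `Vₙ·m·U₀ ⊗ V₀ s₀ U₁ ⊗ ⋯ ⊗ Vₙ₋₁ sₙ₋₁ Uₙ ⊗ ⋯`, for `x = m ⊗ s₀ ⊗ s₁ ⊗ ⋯` and
`W = (U, V)`: a summand of `γ ∘ θ` in degree `n`. -/
def conj [SMul R M] [SMul Rᵐᵒᵖ M] (n : ℕ) (W : ℕ → R × R) (x : M × (ℕ → R)) : M × (ℕ → R) :=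
  ((W n).2 • op (W 0).1 • x.1, fun l => (W l).2 * x.2 l * (W (l + 1)).1)

/-- The sequence obtained from `s` by multiplying the entries at positions `i` and `i + 1`; the
counterpart of `mergeAt` for infinite sequences. -/
def mergeSeq (i : ℕ) (s : ℕ → R) : ℕ → R :=
  fun l => if l < i then s l else if l = i then s l * s (l + 1) else s (l + 1)

/-- The `i`-th face of a generator `x` of degree `n`. Faces are numbered from the right action on
the coefficient (`i = 0`) to the left action (`i = n`), so that the Hochschild face `d_i` is
`face n (n - i)`. -/
def face [SMul R M] [SMul Rᵐᵒᵖ M] (n : ℕ) : ℕ → M × (ℕ → R) → M × (ℕ → R)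
  | 0, x => (op (x.2 0) • x.1, fun l => x.2 (l + 1))
  | i + 1, x => if i + 1 < n then (x.1, mergeSeq i x.2) else (x.2 i • x.1, x.2)

variable [Module R M] [Module Rᵐᵒᵖ M]

theorem face_zero (n : ℕ) (x : M × (ℕ → R)) :
    face n 0 x = (op (x.2 0) • x.1, fun l => x.2 (l + 1)) :=
  rfl

theorem face_succ_of_lt {n i : ℕ} (hi : i + 1 < n) (x : M × (ℕ → R)) :
    face n (i + 1) x = (x.1, mergeSeq i x.2) :=
  if_pos hi

theorem face_last (n : ℕ) (x : M × (ℕ → R)) :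
    face (n + 1) (n + 1) x = (x.2 n • x.1, x.2) :=
  if_neg (lt_irrefl _)

theorem face_zero_twist_zero (n : ℕ) (W : ℕ → R × R) (x : M × (ℕ → R)) :
    face n 0 (twist 0 W x) = (op ((W 0).1 * (W 0).2) • x.1, x.2) := by
  simp [face_zero, twist, smul_smul]

theorem face_zero_twist_insertAt (n t : ℕ) (y : R × R) (W : ℕ → R × R) (x : M × (ℕ → R)) :
    face (n + 1) 0 (twist (t + 1) (insertAt 0 y W) x)
      = (op (y.1 * y.2 * (x.2 0 * (W 0).1)) • x.1, (twist t W (face n 0 x)).2) := by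
  ext l
  · simp [face_zero, twist, insertAt, smul_smul, mul_assoc]
  · grind [face_zero, twist, insertAt]

theorem face_succ_twist_insertAt {n t i : ℕ} (hi : i < t) (ht : t < n) (y : R × R)
    (W : ℕ → R × R) (x : M × (ℕ → R)) :
    face (n + 1) (i + 1) (twist (t + 1) (insertAt (i + 1) y W) x)
      = (op (W 0).1 • x.1, Function.update (twist t W (face n (i + 1) x)).2 i
          ((W i).2 * x.2 i * (y.1 * y.2) * (x.2 (i + 1) * (W (i + 1)).1))) := by
  rw [face_succ_of_lt (by omega), face_succ_of_lt (by omega)]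
  ext l
  · simp [twist, insertAt]
  · simp only [twist, insertAt, mergeSeq, Function.update_apply]
    grind

theorem face_diag_twist_insertAt {n t : ℕ} (ht : t < n) (y : R × R) (W : ℕ → R × R)
    (x : M × (ℕ → R)) :
    face (n + 1) (t + 1) (twist (t + 1) (insertAt (t + 1) y W) x)
      = (op (W 0).1 • x.1, Function.update (face (n + 1) (t + 1) (twist t W x)).2 t
          ((W t).2 * x.2 t * (y.1 * y.2) * 1)) := by
  rw [face_succ_of_lt (by omega), face_succ_of_lt (by omega)]
  ext l
  · simp [twist, insertAt]
  · simp only [twist, insertAt, mergeSeq, Function.update_apply]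
    grind

theorem face_twist_of_lt [SMulCommClass R Rᵐᵒᵖ M] {n t i : ℕ} (ht : t < i) (hi : i ≤ n)
    (W : ℕ → R × R) (x : M × (ℕ → R)) :
    face (n + 1) (i + 1) (twist t W x) = twist t W (face n i x) := by
  obtain ⟨j, rfl⟩ : ∃ j, i = j + 1 := ⟨i - 1, by omega⟩
  rcases hi.lt_or_eq with hi | rfl
  · rw [face_succ_of_lt (by omega), face_succ_of_lt hi]
    ext l
    · rfl
    · simp only [twist, mergeSeq]
      grind
  · rw [face_last, face_last]
    simp [twist, ht.not_gt, ht.ne', smul_comm]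

theorem ofSeq_face_last_twist (n : ℕ) (W : ℕ → R × R) (x : M × (ℕ → R)) :
    ofSeq k n (face (n + 1) (n + 1) (twist n W x)) = ofSeq k n (conj n W x) := by
  simp [ofSeq, face, twist, conj]

theorem boundary_ofSeq {b : ∀ n, HChain k R M (n + 1) →ₗ[k] HChain k R M n}
    (hb : ∀ (n : ℕ) (m : M) (r : Fin (n + 1) → R),
      b n (hgen k m r) =
        hgen k (r (Fin.last n) • m) (Fin.init r)
          + ∑ j : Fin n, ((-1 : ℤ) ^ (n - j.val)) • hgen k m (mergeAt r j)
          + ((-1 : ℤ) ^ (n + 1)) • hgen k (op (r 0) • m) (Fin.tail r))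
    (n : ℕ) (x : M × (ℕ → R)) :
    b n (ofSeq k (n + 1) x)
      = ∑ i ∈ Finset.range (n + 2), (-1 : ℤ) ^ (n + 1 + i) • ofSeq k n (face (n + 1) i x) := by
  have sign (j : Fin n) : (-1 : ℤ) ^ (n + 1 + (j + 1)) = (-1) ^ (n - (j : ℕ)) := by
    rw [show n + 1 + ((j : ℕ) + 1) = n - j + 2 * (j + 1) by omega, pow_add, pow_mul]
    simp
  have ofSeq_face_succ (j : Fin n) : ofSeq k n (face (n + 1) (j + 1) x)
      = hgen k x.1 (mergeAt (fun l : Fin (n + 1) => x.2 l) j) := by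
    rw [face_succ_of_lt (by omega)]
    rfl
  rw [Finset.sum_range_succ, Finset.sum_range_succ', Finset.sum_range, face_zero, face_last,
    Even.neg_one_pow ⟨n + 1, rfl⟩, one_smul, ofSeq, hb, add_assoc, add_comm]
  simp only [sign, ofSeq_face_succ]
  rfl

section Homotopy

variable {α : Type*} [Fintype α] {w : α → R × R}

/-- The `t`-th term `h_t` of the presimplicial homotopy, with values in degree `n`, before the sign:
`∑ m·uₐ₀ ⊗ vₐ₀ s₀ uₐ₁ ⊗ ⋯ ⊗ vₐₜ₋₁ sₜ₋₁ uₐₜ ⊗ vₐₜ ⊗ sₜ ⊗ ⋯`, where `w a = (uₐ, vₐ)`. -/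
noncomputable def homotopyTerm (k : Type u) {R M : Type u} [CommRing k] [Ring R] [Algebra k R]
    [AddCommGroup M] [Module k M] [Module Rᵐᵒᵖ M] {α : Type*} [Fintype α]
    (w : α → R × R) (n t : ℕ) (x : M × (ℕ → R)) : HChain k R M n :=
  wordSum w (t + 1) fun W => ofSeq k n (twist t W x)

/-- The `i`-th face, in degree `n`, of `homotopyTerm k w (n + 1) t x`. -/
noncomputable def faceHomotopyTerm (k : Type u) {R M : Type u} [CommRing k] [Ring R]
    [Algebra k R] [AddCommGroup M] [Module k M] [Module R M] [Module Rᵐᵒᵖ M]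
    {α : Type*} [Fintype α] (w : α → R × R) (n i t : ℕ) (x : M × (ℕ → R)) : HChain k R M n :=
  wordSum w (t + 1) fun W => ofSeq k n (face (n + 1) i (twist t W x))

/-- The operator `m ⊗ s₀ ⊗ ⋯ ⊗ sₙ₋₁ ↦ ∑ vₐₙ·m·uₐ₀ ⊗ vₐ₀ s₀ uₐ₁ ⊗ ⋯ ⊗ vₐₙ₋₁ sₙ₋₁ uₐₙ`, where
`w a = (uₐ, vₐ)`: the form that `γ ∘ θ` takes after the Morita relations are applied. -/
noncomputable def conjSum (k : Type u) {R M : Type u} [CommRing k] [Ring R]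
    [Algebra k R] [AddCommGroup M] [Module k M] [Module R M] [Module Rᵐᵒᵖ M]
    {α : Type*} [Fintype α] (w : α → R × R) (n : ℕ) (x : M × (ℕ → R)) : HChain k R M n :=
  wordSum w (n + 1) fun W => ofSeq k n (conj n W x)

theorem faceHomotopyTerm_zero_zero (hw : ∑ a, (w a).1 * (w a).2 = 1) (n : ℕ)
    (x : M × (ℕ → R)) : faceHomotopyTerm k w n 0 0 x = ofSeq k n x := by
  rw [faceHomotopyTerm, wordSum_succ w le_rfl]
  simpa [wordSum, face_zero_twist_zero, insertAt] using sum_ofSeq_smul (k := k) hw n x.1 x.2 1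

theorem faceHomotopyTerm_of_le (hw : ∑ a, (w a).1 * (w a).2 = 1) {n i t : ℕ} (hi : i ≤ t)
    (ht : t < n) (x : M × (ℕ → R)) :
    faceHomotopyTerm k w n i (t + 1) x = homotopyTerm k w n t (face n i x) := by
  rw [faceHomotopyTerm, wordSum_succ w (hi.trans t.le_succ), homotopyTerm]
  congr 1
  funext W
  cases i with
  | zero =>
    simp_rw [face_zero_twist_insertAt, sum_ofSeq_smul hw]
    simp [twist, face, smul_smul]
  | succ i =>
    simp_rw [face_succ_twist_insertAt hi ht]
    rw [sum_ofSeq_update hw (by omega)]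
    · simp [twist, face, show i + 1 < n by omega]
    · simp [twist, face, mergeSeq, show i + 1 < n by omega, show i < t by omega, mul_assoc]

theorem faceHomotopyTerm_diag (hw : ∑ a, (w a).1 * (w a).2 = 1) {n t : ℕ} (ht : t < n)
    (x : M × (ℕ → R)) :
    faceHomotopyTerm k w n (t + 1) (t + 1) x = faceHomotopyTerm k w n (t + 1) t x := by
  rw [faceHomotopyTerm, wordSum_succ w le_rfl, faceHomotopyTerm]
  congr 1
  funext W
  simp_rw [face_diag_twist_insertAt ht]
  rw [sum_ofSeq_update hw ht] <;> simp [twist, face, mergeSeq, ht]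

theorem faceHomotopyTerm_of_lt [SMulCommClass R Rᵐᵒᵖ M] {n i t : ℕ} (ht : t < i) (hi : i ≤ n)
    (x : M × (ℕ → R)) :
    faceHomotopyTerm k w n (i + 1) t x = homotopyTerm k w n t (face n i x) := by
  simp_rw [faceHomotopyTerm, face_twist_of_lt ht hi, homotopyTerm]

theorem faceHomotopyTerm_last (n : ℕ) (x : M × (ℕ → R)) :
    faceHomotopyTerm k w n (n + 1) n x = conjSum k w n x := by
  simp_rw [faceHomotopyTerm, ofSeq_face_last_twist, conjSum]

variable {b : ∀ n, HChain k R M (n + 1) →ₗ[k] HChain k R M n}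
  (hb : ∀ n (x : M × (ℕ → R)), b n (ofSeq k (n + 1) x)
    = ∑ i ∈ Finset.range (n + 2), (-1 : ℤ) ^ (n + 1 + i) • ofSeq k n (face (n + 1) i x))
  {h : ∀ n, HChain k R M n →ₗ[k] HChain k R M (n + 1)}
  (hh : ∀ n (x : M × (ℕ → R)), h n (ofSeq k n x)
    = ∑ t ∈ Finset.range (n + 1), (-1 : ℤ) ^ (n + t) • homotopyTerm k w (n + 1) t x)

include hb hh

theorem boundary_homotopy_ofSeq (n : ℕ) (x : M × (ℕ → R)) :
    b n (h n (ofSeq k n x)) = -∑ i ∈ Finset.range (n + 2), ∑ t ∈ Finset.range (n + 1),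
      (-1 : ℤ) ^ (i + t) • faceHomotopyTerm k w n i t x := by
  have boundary_homotopyTerm (t : ℕ) : b n (homotopyTerm k w (n + 1) t x)
      = ∑ i ∈ Finset.range (n + 2),
        (-1 : ℤ) ^ (n + 1 + i) • faceHomotopyTerm k w n i t x := by
    simp only [homotopyTerm, faceHomotopyTerm, wordSum, map_sum, hb, Finset.smul_sum]
    exact Finset.sum_comm
  simp only [hh, map_sum, map_zsmul, boundary_homotopyTerm, Finset.smul_sum, smul_smul,
    neg_one_pow_mul_neg_one_pow_succ, neg_smul, Finset.sum_neg_distrib]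
  rw [Finset.sum_comm]

theorem homotopy_boundary_ofSeq (n : ℕ) (x : M × (ℕ → R)) :
    h n (b n (ofSeq k (n + 1) x)) = -∑ i ∈ Finset.range (n + 2), ∑ t ∈ Finset.range (n + 1),
      (-1 : ℤ) ^ (i + t) • homotopyTerm k w (n + 1) t (face (n + 1) i x) := by
  simp only [hb, map_sum, map_zsmul, hh, Finset.smul_sum, smul_smul,
    mul_comm ((-1 : ℤ) ^ (n + 1 + _)), neg_one_pow_mul_neg_one_pow_succ, neg_smul,
    Finset.sum_neg_distrib]

variable (hw : ∑ a, (w a).1 * (w a).2 = 1)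
include hw

theorem boundary_homotopy_zero (x : M × (ℕ → R)) :
    b 0 (h 0 (ofSeq k 0 x)) = conjSum k w 0 x - ofSeq k 0 x := by
  rw [boundary_homotopy_ofSeq hb hh, ← faceHomotopyTerm_last, ← faceHomotopyTerm_zero_zero hw]
  simp only [Finset.sum_range_succ, Finset.sum_range_zero, zero_add, add_zero, pow_zero, pow_one,
    one_smul, neg_smul]
  abel

theorem boundary_homotopy_add_homotopy_boundary [SMulCommClass R Rᵐᵒᵖ M] (n : ℕ)
    (x : M × (ℕ → R)) :
    b (n + 1) (h (n + 1) (ofSeq k (n + 1) x)) + h n (b n (ofSeq k (n + 1) x))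
      = conjSum k w (n + 1) x - ofSeq k (n + 1) x := by
  rw [boundary_homotopy_ofSeq hb hh, homotopy_boundary_ofSeq hb hh, ← neg_add,
    alternating_sum_of_presimplicial_homotopy (n + 1)
      (fun i t => faceHomotopyTerm k w (n + 1) i t x)
      (fun t i => homotopyTerm k w (n + 1) t (face (n + 1) i x))
      (fun _ _ hi ht => faceHomotopyTerm_of_le hw hi ht x)
      (fun _ ht => faceHomotopyTerm_diag hw ht x)
      (fun _ _ ht hi => faceHomotopyTerm_of_lt ht hi x),
    neg_sub, faceHomotopyTerm_last, faceHomotopyTerm_zero_zero hw]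

end Homotopy

section Tuples

variable {α : Type*} [Fintype α] (w : α → R × R)

omit [Module R M] in
theorem homotopyTerm_eq_sum_hgen {n t : ℕ} (x : M × (ℕ → R)) :
    homotopyTerm k w n t x = ∑ c : Fin (t + 1) → α, hgen k (op (w (c 0)).1 • x.1) fun l : Fin n =>
      if hl : l.val < t then
        (w (c ⟨l, by omega⟩)).2 * x.2 l * (w (c ⟨l + 1, by omega⟩)).1
      else if l.val = t then (w (c (Fin.last t))).2
      else x.2 (l - 1) := by
  simp only [homotopyTerm, wordSum, ofSeq, twist]
  refine Finset.sum_congr rfl fun c _ => ?_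
  congr 1
  · rw [extend_val_of_lt _ _ t.succ_pos]
    rfl
  · funext l
    split_ifs with hl
    · rw [extend_val_of_lt _ _ (by omega), extend_val_of_lt _ _ (by omega)]
      rfl
    · rw [extend_val_of_lt _ _ t.lt_succ_self]
      rfl
    · rfl

theorem conjSum_eq_sum_hgen (n : ℕ) (x : M × (ℕ → R)) :
    conjSum k w n x = ∑ c : Fin (n + 1) → α, hgen k ((w (c 0)).2 • op (w (c 1)).1 • x.1)
      fun l : Fin n => (w (c l.succ)).2 * x.2 l * (w (c (l.succ + 1))).1 := by
  simp only [conjSum, wordSum, ofSeq, conj]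
  rw [← (Equiv.arrowCongr (Equiv.addRight (1 : Fin (n + 1))).symm (Equiv.refl α)).sum_comp]
  refine Finset.sum_congr rfl fun c _ => ?_
  congr 1
  · rw [extend_val_of_lt _ _ n.succ_pos, extend_val_of_lt _ _ n.lt_succ_self]
    have last_add_one : (⟨n, n.lt_succ_self⟩ : Fin (n + 1)) + 1 = 0 := Fin.last_add_one n
    simp [last_add_one]
  · funext l
    have castSucc_add_one : (⟨l, by omega⟩ : Fin (n + 1)) + 1 = l.succ := Fin.coeSucc_eq_succ
    have succ_eq : (⟨l + 1, by omega⟩ : Fin (n + 1)) = l.succ := rfl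
    rw [extend_val_of_lt _ _ (by omega), extend_val_of_lt _ _ (by omega)]
    simp [castSucc_add_one, succ_eq]

end Tuples

end HChain

/-- Let `(R, S, P, Q, φ, ψ)` be a Morita context over `k` and `M` an
`(R,R)`-bimodule with symmetric `k`-action.  Then the composite `γ_• ∘ θ_•` is chain
homotopic to the identity via the explicit homotopy `h_•`:  one has
`b ∘ h_0 = γ_0 ∘ θ_0 − id` on `C_0(R, M)`, and
`b ∘ h_n + h_{n−1} ∘ b = γ_n ∘ θ_n − id` on `C_n(R, M)` for every `n ≥ 1`. -/
theorem gamma_theta_homotopic_id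
    (k R S P Q M Mt : Type u) [CommRing k] [Ring R] [Ring S] [Algebra k R] [Algebra k S]
    [AddCommGroup P] [Module k P] [Module S P] [Module Rᵐᵒᵖ P]
    [SMulCommClass S Rᵐᵒᵖ P] [IsScalarTower k S P] [IsScalarTower k Rᵐᵒᵖ P]
    [AddCommGroup Q] [Module k Q] [Module R Q] [Module Sᵐᵒᵖ Q]
    [SMulCommClass R Sᵐᵒᵖ Q] [IsScalarTower k R Q] [IsScalarTower k Sᵐᵒᵖ Q]
    [AddCommGroup M] [Module k M] [Module R M] [Module Rᵐᵒᵖ M]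
    [SMulCommClass R Rᵐᵒᵖ M] [IsScalarTower k R M] [IsScalarTower k Rᵐᵒᵖ M]
    [AddCommGroup Mt] [Module k Mt] [Module S Mt] [Module Sᵐᵒᵖ Mt]
    [SMulCommClass S Sᵐᵒᵖ Mt] [IsScalarTower k S Mt] [IsScalarTower k Sᵐᵒᵖ Mt]
    -- the Morita context and the fixed finite families with `Σⱼ φ(p'ⱼ ⊗ q'ⱼ) = 1_S`
    -- and `Σᵢ ψ(qᵢ ⊗ pᵢ) = 1_R`
    (ctx : MoritaContext k R S P Q)
    (ι κ : Type u) [Fintype ι] [Fintype κ]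
    (pI : ι → P) (qI : ι → Q) (pJ : κ → P) (qJ : κ → Q)
    (hI : ∑ i : ι, ctx.ψ (qI i) (pI i) = 1)
    (hJ : ∑ j : κ, ctx.φ (pJ j) (qJ j) = 1)
    -- `Mt` plays the role of `M̃ = P ⊗_R M ⊗_R Q`, with `emb p m q` the class of
    -- `p ⊗ m ⊗ q`; it is an `(S,S)`-bimodule spanned by these classes, the `S`-actions
    -- being `s·(p ⊗ m ⊗ q)·s' = (s·p) ⊗ m ⊗ (q·s')`, and the tensor products are
    -- balanced over `R`
    (emb : P →ₗ[k] M →ₗ[k] Q →ₗ[k] Mt)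
    (hemb_bal₁ : ∀ (r : R) (p : P) (m : M) (q : Q), emb (op r • p) m q = emb p (r • m) q)
    (hemb_bal₂ : ∀ (r : R) (p : P) (m : M) (q : Q), emb p (op r • m) q = emb p m (r • q))
    (hemb_left : ∀ (s : S) (p : P) (m : M) (q : Q), emb (s • p) m q = s • emb p m q)
    (hemb_right : ∀ (s : S) (p : P) (m : M) (q : Q), emb p m (op s • q) = op s • emb p m q)
    (hemb_span : Submodule.span k {x : Mt | ∃ (p : P) (m : M) (q : Q), emb p m q = x} = ⊤)
    -- the Hochschild boundaries of `C_•(R, M)` and `C_•(S, M̃)`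
    (bR : ∀ n, HChain k R M (n + 1) →ₗ[k] HChain k R M n)
    (hbR : ∀ (n : ℕ) (m : M) (r : Fin (n + 1) → R),
      bR n (hgen k m r) =
        hgen k (r (Fin.last n) • m) (Fin.init r)
          + ∑ j : Fin n, ((-1 : ℤ) ^ (n - j.val)) • hgen k m (mergeAt r j)
          + ((-1 : ℤ) ^ (n + 1)) • hgen k (op (r 0) • m) (Fin.tail r))
    (bS : ∀ n, HChain k S Mt (n + 1) →ₗ[k] HChain k S Mt n)
    (hbS : ∀ (n : ℕ) (m : Mt) (s : Fin (n + 1) → S),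
      bS n (hgen k m s) =
        hgen k (s (Fin.last n) • m) (Fin.init s)
          + ∑ j : Fin n, ((-1 : ℤ) ^ (n - j.val)) • hgen k m (mergeAt s j)
          + ((-1 : ℤ) ^ (n + 1)) • hgen k (op (s 0) • m) (Fin.tail s))
    -- the chain map `θ_•`
    (θ : ∀ n, HChain k R M n →ₗ[k] HChain k S Mt n)
    (hθ : ∀ (n : ℕ) (m : M) (r : Fin n → R),
      θ n (hgen k m r) =
        ∑ f : Fin (n + 1) → ι,
          hgen k (emb (pI (f 0)) m (qI (f 1)))
            (fun l : Fin n => ctx.φ (pI (f l.succ)) (r l • qI (f (l.succ + 1)))))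
    -- the chain map `γ_•`
    (γ : ∀ n, HChain k S Mt n →ₗ[k] HChain k R M n)
    (hγ : ∀ (n : ℕ) (p : P) (m : M) (q : Q) (s : Fin n → S),
      γ n (hgen k (emb p m q) s) =
        ∑ g : Fin (n + 1) → κ,
          hgen k (ctx.ψ (qJ (g 0)) p • (op (ctx.ψ q (pJ (g 1))) • m))
            (fun l : Fin n => ctx.ψ (qJ (g l.succ)) (s l • pJ (g (l.succ + 1)))))
    -- the explicit homotopy `h_•`
    (h : ∀ n, HChain k R M n →ₗ[k] HChain k R M (n + 1))
    (hh : ∀ (n : ℕ) (m : M) (r : Fin n → R),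
      h n (hgen k m r) =
        ∑ t : Fin (n + 1), ∑ f : Fin (t.val + 1) → ι, ∑ g : Fin (t.val + 1) → κ,
          ((-1 : ℤ) ^ (n + t.val)) •
            hgen k (op (ctx.ψ (qI (f 0)) (pJ (g 0))) • m)
              (fun l : Fin (n + 1) =>
                if hl : l.val < t.val then
                  ctx.ψ (qJ (g ⟨l.val, by omega⟩)) (pI (f ⟨l.val, by omega⟩))
                    * r ⟨l.val, by have := t.isLt; omega⟩
                    * ctx.ψ (qI (f ⟨l.val + 1, by omega⟩)) (pJ (g ⟨l.val + 1, by omega⟩))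
                else if hl2 : l.val = t.val then
                  ctx.ψ (qJ (g (Fin.last t.val))) (pI (f (Fin.last t.val)))
                else r ⟨l.val - 1, by have := l.isLt; omega⟩))
 :
    (bR 0).comp (h 0) = (γ 0).comp (θ 0) - LinearMap.id ∧
    ∀ n : ℕ, (bR (n + 1)).comp (h (n + 1)) + (h n).comp (bR n)
      = (γ (n + 1)).comp (θ (n + 1)) - LinearMap.id := by
  let w : ι × κ → R × R := fun a => (ctx.ψ (qI a.1) (pJ a.2), ctx.ψ (qJ a.2) (pI a.1))
  have hw : ∑ a, (w a).1 * (w a).2 = 1 := ctx.sum_ψ_mul_ψ hI hJ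
  have boundary_ofSeq := HChain.boundary_ofSeq hbR
  have homotopy_ofSeq (n : ℕ) (x : M × (ℕ → R)) : h n (HChain.ofSeq k n x)
      = ∑ t ∈ Finset.range (n + 1), (-1 : ℤ) ^ (n + t) • HChain.homotopyTerm k w (n + 1) t x := by
    simp_rw [HChain.ofSeq, hh, sum_sum_pi_eq_sum_pi_prod, ← Finset.smul_sum, Finset.sum_range,
      HChain.homotopyTerm_eq_sum_hgen]
    rfl
  have γ_θ_ofSeq (n : ℕ) (x : M × (ℕ → R)) :
      γ n (θ n (HChain.ofSeq k n x)) = HChain.conjSum k w n x := by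
    simp_rw [HChain.ofSeq, hθ, map_sum, hγ, sum_sum_pi_eq_sum_pi_prod, ctx.ψ_φ_smul, ctx.ψ_left,
      ← mul_assoc, HChain.conjSum_eq_sum_hgen]
    rfl
  refine ⟨HChain.hom_ext_ofSeq fun x => ?_, fun n => HChain.hom_ext_ofSeq fun x => ?_⟩
  · simpa [γ_θ_ofSeq] using HChain.boundary_homotopy_zero boundary_ofSeq homotopy_ofSeq hw x
  · simpa [γ_θ_ofSeq] using
      HChain.boundary_homotopy_add_homotopy_boundary boundary_ofSeq homotopy_ofSeq hw n x
end

section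
/- Let (R,S,P,Q,φ,ψ) be a Morita context over k. View θ and γ in the case M = R as maps θ_n : R^{⊗(n+1)} → S^{⊗(n+1)}, θ_n(r_0 ⊗ ⋯ ⊗ r_n) = Σ_{i_0,…,i_n} φ(p_{i_0}·r_0 ⊗ q_{i_1}) ⊗ φ(p_{i_1}·r_1 ⊗ q_{i_2}) ⊗ ⋯ ⊗ φ(p_{i_n}·r_n ⊗ q_{i_0}), and γ_n : S^{⊗(n+1)} → R^{⊗(n+1)}, γ_n(s_0 ⊗ ⋯ ⊗ s_n) = Σ_{j_0,…,j_n} ψ(q'_{j_0} ⊗ s_0·p'_{j_1}) ⊗ ψ(q'_{j_1} ⊗ s_1·p'_{j_2}) ⊗ ⋯ ⊗ ψ(q'_{j_n} ⊗ s_n·p'_{j_0}). Then θ and γ commute with the cyclic operators: θ_n ∘ t_n = t_n ∘ θ_n and γ_n ∘ t_n = t_n ∘ γ_n for all n ≥ 0, where t_n(a_0 ⊗ a_1 ⊗ ⋯ ⊗ a_n) := a_1 ⊗ ⋯ ⊗ a_n ⊗ a_0 denotes the cyclic operator on A^{⊗_k(n+1)} for A = R and A = S respectively. -/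
open scoped TensorProduct
open MulOpposite

universe u

section Cyclic

variable (k : Type u) [CommRing k]

/-- The `k`-module `A^{⊗_k (n+1)}` underlying the cyclic module of a `k`-algebra `A`. -/
abbrev CycChain (A : Type u) [Ring A] [Algebra k A] (n : ℕ) :=
  PiTensorProduct k (fun _ : Fin (n + 1) => A)

/-- The generator `r₀ ⊗ r₁ ⊗ ⋯ ⊗ rₙ` of `A^{⊗_k (n+1)}`. -/
noncomputable def cgen {A : Type u} [Ring A] [Algebra k A] {n : ℕ}
    (r : Fin (n + 1) → A) : CycChain k A n :=
  PiTensorProduct.tprod k r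

end Cyclic

/-!
Each of `θ_n` and `γ_n` is a sum over labellings of the `n + 1` cyclically ordered tensor positions,
in which the factor at a position depends only on the entry there, its label and the label at the
next position.  Rotating the entries is thus the same as rotating the factors and the labels, and
rotation permutes the labellings.
-/

lemma eq_reindex_of_forall_tprod {k I J M : Type*} [CommSemiring k] [AddCommMonoid M] [Module k M]
    {t : (⨂[k] _ : I, M) →ₗ[k] ⨂[k] _ : J, M} {e : J ≃ I}
    (ht : ∀ r : I → M, t (⨂ₜ[k] i, r i) = ⨂ₜ[k] j, r (e j)) :
    t = (PiTensorProduct.reindex k (fun _ => M) e.symm).toLinearMap := by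
  ext r
  simp only [LinearMap.compMultilinearMap_apply, LinearEquiv.coe_coe,
    PiTensorProduct.reindex_tprod, Equiv.symm_symm, ht]

section LabelSum

variable (k : Type*) {I ι M N : Type*} [CommSemiring k]
  [AddCommMonoid N] [Module k N] [Fintype I] [DecidableEq I] [Fintype ι]

/-- The sum over all labellings `f : I → ι` of the pure tensor whose factor at the site `l` is
`w (f l) (f (next l)) (r l)`.  The sums defining `θ_n` and `γ_n` are of this form: the sites are
`Fin (n + 1)`, `next l = l + 1`, and `w` is `(i, j, r) ↦ φ(p_i·r ⊗ q_j)` for `θ_n` and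
`(i, j, s) ↦ ψ(q'_i ⊗ s·p'_j)` for `γ_n`. -/
noncomputable def labelSum (next : I → I) (w : ι → ι → M → N) (r : I → M) : ⨂[k] _ : I, N :=
  ∑ f : I → ι, ⨂ₜ[k] l, w (f l) (f (next l)) (r l)

lemma reindex_labelSum {next : I → I} {e : Equiv.Perm I} (he : Function.Commute e next)
    (w : ι → ι → M → N) (r : I → M) :
    PiTensorProduct.reindex k (fun _ => N) e.symm (labelSum k next w r) =
      labelSum k next w (r ∘ e) := by
  simp only [labelSum, map_sum, PiTensorProduct.reindex_tprod, Equiv.symm_symm]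
  refine Fintype.sum_equiv (e.symm.arrowCongr (Equiv.refl ι)) _ _ fun f => ?_
  simp [he.eq]

variable {k} [AddCommMonoid M] [Module k M]

theorem theta_gamma_commute_with_cyclic_operator_general {next : I → I} {e : Equiv.Perm I}
    (he : Function.Commute e next) {w : ι → ι → M → N}
    {T : (⨂[k] _ : I, M) →ₗ[k] ⨂[k] _ : I, N}
    (hT : ∀ r : I → M, T (⨂ₜ[k] l, r l) = labelSum k next w r) :
    T ∘ₗ (PiTensorProduct.reindex k (fun _ => M) e.symm).toLinearMap =
      (PiTensorProduct.reindex k (fun _ => N) e.symm).toLinearMap ∘ₗ T := by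
  ext r
  simp only [LinearMap.compMultilinearMap_apply, LinearMap.comp_apply, LinearEquiv.coe_coe,
    PiTensorProduct.reindex_tprod, Equiv.symm_symm, hT, reindex_labelSum k he, Function.comp_def]

end LabelSum

/-- Let `(R, S, P, Q, φ, ψ)` be a Morita context over `k`.  In the case
`M = R`, view `θ` and `γ` as maps `θ_n : R^{⊗(n+1)} → S^{⊗(n+1)}`,
`θ_n (r₀ ⊗ ⋯ ⊗ r_n) = Σ_{i₀,…,i_n} φ(p_{i₀}·r₀ ⊗ q_{i₁}) ⊗ ⋯ ⊗ φ(p_{i_n}·r_n ⊗ q_{i₀})`, and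
`γ_n : S^{⊗(n+1)} → R^{⊗(n+1)}`,
`γ_n (s₀ ⊗ ⋯ ⊗ s_n) = Σ_{j₀,…,j_n} ψ(q'_{j₀} ⊗ s₀·p'_{j₁}) ⊗ ⋯ ⊗ ψ(q'_{j_n} ⊗ s_n·p'_{j₀})`
(indices taken cyclically).  Then `θ` and `γ` commute with the cyclic operators
`t_n (a₀ ⊗ ⋯ ⊗ a_n) = a₁ ⊗ ⋯ ⊗ a_n ⊗ a₀`:  `θ_n ∘ t_n = t_n ∘ θ_n` and
`γ_n ∘ t_n = t_n ∘ γ_n` for all `n ≥ 0`. -/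
theorem theta_gamma_commute_with_cyclic_operator
    (k R S P Q : Type u) [CommRing k] [Ring R] [Ring S] [Algebra k R] [Algebra k S]
    [AddCommGroup P] [Module k P] [Module S P] [Module Rᵐᵒᵖ P]
    [SMulCommClass S Rᵐᵒᵖ P] [IsScalarTower k S P] [IsScalarTower k Rᵐᵒᵖ P]
    [AddCommGroup Q] [Module k Q] [Module R Q] [Module Sᵐᵒᵖ Q]
    [SMulCommClass R Sᵐᵒᵖ Q] [IsScalarTower k R Q] [IsScalarTower k Sᵐᵒᵖ Q]
    (ctx : MoritaContext k R S P Q)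
    (ι κ : Type u) [Fintype ι] [Fintype κ]
    (pI : ι → P) (qI : ι → Q) (pJ : κ → P) (qJ : κ → Q)
    (hI : ∑ i : ι, ctx.ψ (qI i) (pI i) = 1)
    (hJ : ∑ j : κ, ctx.φ (pJ j) (qJ j) = 1)
    -- `θ_•` and `γ_•` in the case `M = R`
    (θ : ∀ n, CycChain k R n →ₗ[k] CycChain k S n)
    (hθ : ∀ (n : ℕ) (r : Fin (n + 1) → R),
      θ n (cgen k r) =
        ∑ f : Fin (n + 1) → ι,
          cgen k (fun l => ctx.φ (op (r l) • pI (f l)) (qI (f (l + 1)))))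
    (γ : ∀ n, CycChain k S n →ₗ[k] CycChain k R n)
    (hγ : ∀ (n : ℕ) (s : Fin (n + 1) → S),
      γ n (cgen k s) =
        ∑ g : Fin (n + 1) → κ,
          cgen k (fun l => ctx.ψ (qJ (g l)) (s l • pJ (g (l + 1)))))
    -- the cyclic operators on `R^{⊗(n+1)}` and `S^{⊗(n+1)}`
    (tR : ∀ n, CycChain k R n →ₗ[k] CycChain k R n)
    (htR : ∀ (n : ℕ) (r : Fin (n + 1) → R), tR n (cgen k r) = cgen k (fun l => r (l + 1)))
    (tS : ∀ n, CycChain k S n →ₗ[k] CycChain k S n)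
    (htS : ∀ (n : ℕ) (s : Fin (n + 1) → S), tS n (cgen k s) = cgen k (fun l => s (l + 1))) :
    ∀ n : ℕ, (θ n).comp (tR n) = (tS n).comp (θ n) ∧
      (γ n).comp (tS n) = (tR n).comp (γ n) := by
  intro n
  have he : Function.Commute (Equiv.addRight (1 : Fin (n + 1))) (· + 1) := Function.Commute.refl _
  rw [eq_reindex_of_forall_tprod (e := Equiv.addRight 1) (htR n),
    eq_reindex_of_forall_tprod (e := Equiv.addRight 1) (htS n)]
  exact ⟨theta_gamma_commute_with_cyclic_operator_general he
      (w := fun i j r => ctx.φ (op r • pI i) (qI j)) (hθ n),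
    theta_gamma_commute_with_cyclic_operator_general he
      (w := fun i j s => ctx.ψ (qJ i) (s • pJ j)) (hγ n)⟩
end

section
/- Let (R,S,P,Q,φ,ψ) be a Morita context over k. Set P^e := P ⊗_k Q, an (S ⊗_k S^op, R ⊗_k R^op)-bimodule via (s ⊗ s̃^op)·(p ⊗ q)·(r ⊗ r̃^op) := (s·p·r) ⊗ (r̃·q·s̃), and Q^e := Q ⊗_k P, an (R ⊗_k R^op, S ⊗_k S^op)-bimodule via (r ⊗ r̃^op)·(q ⊗ p)·(s ⊗ s̃^op) := (r·q·s) ⊗ (s̃·p·r̃). Then the k-linear maps Φ : P^e ⊗_{R⊗R^op} Q^e → S ⊗_k S^op, (p ⊗ q) ⊗ (q' ⊗ p') ↦ φ(p ⊗ q') ⊗ φ(p' ⊗ q)^op, and Ψ : Q^e ⊗_{S⊗S^op} P^e → R ⊗_k R^op, (q ⊗ p) ⊗ (p' ⊗ q') ↦ ψ(q ⊗ p') ⊗ ψ(q' ⊗ p)^op, are well-defined bimodule isomorphisms; hence (R ⊗_k R^op, S ⊗_k S^op, P^e, Q^e, Φ, Ψ) is again a Morita context. -/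
open scoped TensorProduct
open MulOpposite

universe u

section BaseChange

variable (k : Type u) [CommRing k]

/-- The map `Φ : P^e ⊗ Q^e → S ⊗_k S^op`, `(p ⊗ q) ⊗ (q' ⊗ p') ↦ φ(p ⊗ q') ⊗ φ(p' ⊗ q)^op`,
where `P^e = P ⊗_k Q^op` and `Q^e = Q ⊗_k P^op` are realized as `P ⊗[k] Q` and `Q ⊗[k] P`. -/
noncomputable def PhiMap {S P Q : Type u} [Ring S] [Algebra k S]
    [AddCommGroup P] [Module k P] [AddCommGroup Q] [Module k Q]
    (φ : P →ₗ[k] Q →ₗ[k] S) :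
    (P ⊗[k] Q) ⊗[k] (Q ⊗[k] P) →ₗ[k] S ⊗[k] Sᵐᵒᵖ :=
  (TensorProduct.map (TensorProduct.lift φ)
      ((MulOpposite.opLinearEquiv k).toLinearMap ∘ₗ TensorProduct.lift φ ∘ₗ
        (TensorProduct.comm k Q P).toLinearMap)) ∘ₗ
    (TensorProduct.tensorTensorTensorComm k P Q Q P).toLinearMap

/-- The submodule of balancing relations for the tensor product `P^e ⊗_{R^e} Q^e`, where
`R^e = R ⊗_k R^op` acts on the right of `P^e = P ⊗_k Q^op` by
`(p ⊗ q)·(r ⊗ r̃^op) = (p·r) ⊗ (r̃·q)` and on the left of `Q^e = Q ⊗_k P^op` by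
`(r ⊗ r̃^op)·(q ⊗ p) = (r·q) ⊗ (p·r̃)`. -/
def relPeQe {R P Q : Type u} [Ring R] [Algebra k R]
    [AddCommGroup P] [Module k P] [Module Rᵐᵒᵖ P]
    [AddCommGroup Q] [Module k Q] [Module R Q] :
    Submodule k ((P ⊗[k] Q) ⊗[k] (Q ⊗[k] P)) :=
  Submodule.span k
    {x | ∃ (r r' : R) (p : P) (q : Q) (q₂ : Q) (p₂ : P),
      x = ((op r • p) ⊗ₜ[k] (r' • q)) ⊗ₜ[k] (q₂ ⊗ₜ[k] p₂)
          - (p ⊗ₜ[k] q) ⊗ₜ[k] ((r • q₂) ⊗ₜ[k] (op r' • p₂))}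

end BaseChange

/-! After interchanging the two middle tensor factors, `Φ` becomes `φ ⊗ φ^op`. Both factors are
surjective, so by right exactness the kernel of `Φ` is generated by the kernels of the two factors,
that is, by the `R`-balancing relations of `P ⊗ Q` and their mirror images in `Q ⊗ P`. The
telescoping identity

  `(p·r ⊗ q₂) ⊗ (r₂·q ⊗ p₂) - (p ⊗ r·q₂) ⊗ (q ⊗ p₂·r₂)`
  `  = (p·r ⊗ q₂ - p ⊗ r·q₂) ⊗ (r₂·q ⊗ p₂) + (p ⊗ r·q₂) ⊗ (r₂·q ⊗ p₂ - q ⊗ p₂·r₂)`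

shows that these generate the same submodule as the balancing relations over `R ⊗ R^op`.
-/

theorem ker_tensorProduct_map {k M N M' N' : Type*} [CommRing k]
    [AddCommGroup M] [Module k M] [AddCommGroup N] [Module k N]
    [AddCommGroup M'] [Module k M'] [AddCommGroup N'] [Module k N']
    {f : M →ₗ[k] M'} {g : N →ₗ[k] N'}
    (hf : Function.Surjective f) (hg : Function.Surjective g) :
    LinearMap.ker (TensorProduct.map f g) =
      Submodule.map₂ (TensorProduct.mk k M N) (LinearMap.ker f) ⊤ ⊔
        Submodule.map₂ (TensorProduct.mk k M N) ⊤ (LinearMap.ker g) := by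
  rw [TensorProduct.map_ker f.exact_subtype_ker_map hf g.exact_subtype_ker_map hg, sup_comm,
    LinearMap.rTensor, LinearMap.lTensor, TensorProduct.range_map, TensorProduct.range_map]
  simp only [Submodule.range_subtype, LinearMap.range_id]

/-- The balancing relations of `P ⊗_R Q` and of its mirror image `Q ⊗_{R^op} P`, imposed on the two
factors of `(P ⊗ Q) ⊗ (Q ⊗ P)` separately, as opposed to the simultaneous relations `relPeQe`. The
mirrored relations are encoded as the image of `midRel` under the swap. -/
def factorwiseRel (k R P Q : Type u) [CommRing k] [Ring R] [Algebra k R]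
    [AddCommGroup P] [Module k P] [Module Rᵐᵒᵖ P] [AddCommGroup Q] [Module k Q] [Module R Q] :
    Submodule k ((P ⊗[k] Q) ⊗[k] (Q ⊗[k] P)) :=
  Submodule.map₂ (TensorProduct.mk k (P ⊗[k] Q) (Q ⊗[k] P)) (midRel k R P Q) ⊤ ⊔
    Submodule.map₂ (TensorProduct.mk k (P ⊗[k] Q) (Q ⊗[k] P)) ⊤
      ((midRel k R P Q).map (TensorProduct.comm k P Q).toLinearMap)

section Relations

variable {k R P Q : Type u} [CommRing k] [Ring R] [Algebra k R]
  [AddCommGroup P] [Module k P] [Module Rᵐᵒᵖ P] [AddCommGroup Q] [Module k Q] [Module R Q]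

theorem tmul_sub_tmul_mem_midRel (r : R) (p : P) (q : Q) :
    (op r • p) ⊗ₜ[k] q - p ⊗ₜ[k] (r • q) ∈ midRel k R P Q :=
  Submodule.subset_span ⟨p, r, q, rfl⟩

theorem tmul_sub_tmul_mem_relPeQe (r r' : R) (p p₂ : P) (q q₂ : Q) :
    ((op r • p) ⊗ₜ[k] (r' • q)) ⊗ₜ[k] (q₂ ⊗ₜ[k] p₂)
      - (p ⊗ₜ[k] q) ⊗ₜ[k] ((r • q₂) ⊗ₜ[k] (op r' • p₂)) ∈ relPeQe k (R := R) (P := P) (Q := Q) :=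
  Submodule.subset_span ⟨r, r', p, q, q₂, p₂, rfl⟩

theorem map₂_midRel_top_le_comap_relPeQe :
    Submodule.map₂ (TensorProduct.mk k (P ⊗[k] Q) (Q ⊗[k] P)) (midRel k R P Q) ⊤ ≤
      (relPeQe k (R := R)).comap
        (TensorProduct.tensorTensorTensorComm k P Q Q P).symm.toLinearMap := by
  rw [midRel, ← TensorProduct.span_tmul_eq_top, Submodule.map₂_span_span, Submodule.span_le]
  rintro _ ⟨_, ⟨p, r, q₂, rfl⟩, _, ⟨q, p₂, rfl⟩, rfl⟩
  simpa [TensorProduct.sub_tmul] using tmul_sub_tmul_mem_relPeQe (k := k) r 1 p p₂ q q₂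

theorem map₂_top_map_comm_midRel_le_comap_relPeQe :
    Submodule.map₂ (TensorProduct.mk k (P ⊗[k] Q) (Q ⊗[k] P)) ⊤
        ((midRel k R P Q).map (TensorProduct.comm k P Q).toLinearMap) ≤
      (relPeQe k (R := R)).comap
        (TensorProduct.tensorTensorTensorComm k P Q Q P).symm.toLinearMap := by
  rw [midRel, Submodule.map_span, ← TensorProduct.span_tmul_eq_top, Submodule.map₂_span_span,
    Submodule.span_le]
  rintro _ ⟨_, ⟨p, q₂, rfl⟩, _, ⟨_, ⟨p₂, r, q, rfl⟩, rfl⟩, rfl⟩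
  simpa [TensorProduct.tmul_sub] using
    neg_mem (tmul_sub_tmul_mem_relPeQe (k := k) 1 r p p₂ q q₂)

theorem factorwiseRel_le_comap_relPeQe :
    factorwiseRel k R P Q ≤
      (relPeQe k (R := R)).comap
        (TensorProduct.tensorTensorTensorComm k P Q Q P).symm.toLinearMap :=
  sup_le map₂_midRel_top_le_comap_relPeQe map₂_top_map_comm_midRel_le_comap_relPeQe

theorem relPeQe_le_comap_factorwiseRel :
    relPeQe k (R := R) ≤
      (factorwiseRel k R P Q).comap
        (TensorProduct.tensorTensorTensorComm k P Q Q P).toLinearMap := by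
  refine Submodule.span_le.2 ?_
  rintro _ ⟨r, r', p, q, q₂, p₂, rfl⟩
  have leftTerm := Submodule.apply_mem_map₂ (TensorProduct.mk k (P ⊗[k] Q) (Q ⊗[k] P))
    (tmul_sub_tmul_mem_midRel r p q₂) (Submodule.mem_top (x := (r' • q) ⊗ₜ[k] p₂))
  have rightTerm := Submodule.apply_mem_map₂ (TensorProduct.mk k (P ⊗[k] Q) (Q ⊗[k] P))
    (Submodule.mem_top (x := p ⊗ₜ[k] (r • q₂)))
    (Submodule.mem_map_of_mem (f := (TensorProduct.comm k P Q).toLinearMap)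
      (neg_mem (tmul_sub_tmul_mem_midRel r' p₂ q)))
  simpa [factorwiseRel, TensorProduct.sub_tmul, TensorProduct.tmul_sub] using
    Submodule.add_mem_sup leftTerm rightTerm

theorem relPeQe_eq_comap_factorwiseRel :
    relPeQe k (R := R) =
      (factorwiseRel k R P Q).comap
        (TensorProduct.tensorTensorTensorComm k P Q Q P).toLinearMap := by
  refine le_antisymm relPeQe_le_comap_factorwiseRel fun x hx ↦ ?_
  simpa [-TensorProduct.tensorTensorTensorComm_symm] using factorwiseRel_le_comap_relPeQe hx

end Relations

section Pairing

variable {k R S P Q : Type u} [CommRing k] [Ring R] [Algebra k R] [Ring S] [Algebra k S]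
  [AddCommGroup P] [Module k P] [AddCommGroup Q] [Module k Q]
  {φ : P →ₗ[k] Q →ₗ[k] S} {ψ : Q →ₗ[k] P →ₗ[k] R}

/-- The opposite `φ^op : Q ⊗ P → S^op`, `q ⊗ p ↦ φ(p ⊗ q)^op`, of a pairing `φ`: the second tensor
factor of `Φ`. -/
noncomputable def oppositePairing (φ : P →ₗ[k] Q →ₗ[k] S) : Q ⊗[k] P →ₗ[k] Sᵐᵒᵖ :=
  (opLinearEquiv k).toLinearMap ∘ₗ TensorProduct.lift φ ∘ₗ (TensorProduct.comm k Q P).toLinearMap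

theorem oppositePairing_surjective (hφ : Function.Surjective (TensorProduct.lift φ)) :
    Function.Surjective (oppositePairing φ) :=
  (opLinearEquiv k).surjective.comp (hφ.comp (TensorProduct.comm k Q P).surjective)

theorem ker_oppositePairing :
    LinearMap.ker (oppositePairing φ) =
      (LinearMap.ker (TensorProduct.lift φ)).map (TensorProduct.comm k P Q).toLinearMap := by
  rw [oppositePairing, LinearEquiv.ker_comp, LinearMap.ker_comp, ← TensorProduct.comm_symm,
    Submodule.map_equiv_eq_comap_symm]

theorem PhiMap_eq_map_comp :
    PhiMap k φ = TensorProduct.map (TensorProduct.lift φ) (oppositePairing φ) ∘ₗ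
      (TensorProduct.tensorTensorTensorComm k P Q Q P).toLinearMap :=
  rfl

theorem PhiMap_tmul (p p' : P) (q q' : Q) :
    PhiMap k φ ((p ⊗ₜ[k] q) ⊗ₜ[k] (q' ⊗ₜ[k] p')) = φ p q' ⊗ₜ[k] op (φ p' q) :=
  rfl

theorem PhiMap_surjective (hφ : Function.Surjective (TensorProduct.lift φ)) :
    Function.Surjective (PhiMap k φ) :=
  (TensorProduct.map_surjective hφ (oppositePairing_surjective hφ)).comp
    (TensorProduct.tensorTensorTensorComm k P Q Q P).surjective

theorem ker_PhiMap [Module Rᵐᵒᵖ P] [Module R Q]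
    (hφ : Function.Surjective (TensorProduct.lift φ))
    (hker : LinearMap.ker (TensorProduct.lift φ) = midRel k R P Q) :
    LinearMap.ker (PhiMap k φ) = relPeQe k (R := R) := by
  rw [PhiMap_eq_map_comp, LinearMap.ker_comp,
    ker_tensorProduct_map hφ (oppositePairing_surjective hφ), ker_oppositePairing, hker,
    relPeQe_eq_comap_factorwiseRel, factorwiseRel]

theorem PhiMap_leftAction [Module S P] [Module Sᵐᵒᵖ Q]
    (hleft : ∀ (s : S) (p : P) (q : Q), φ (s • p) q = s * φ p q)
    (hright : ∀ (s : S) (p : P) (q : Q), φ p (op s • q) = φ p q * s)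
    {lact : (S ⊗[k] Sᵐᵒᵖ) →ₗ[k] (P ⊗[k] Q) →ₗ[k] (P ⊗[k] Q)}
    (hlact : ∀ (s s' : S) (p : P) (q : Q),
      lact (s ⊗ₜ[k] op s') (p ⊗ₜ[k] q) = (s • p) ⊗ₜ[k] (op s' • q))
    (a : S ⊗[k] Sᵐᵒᵖ) (x : P ⊗[k] Q) (y : Q ⊗[k] P) :
    PhiMap k φ (lact a x ⊗ₜ[k] y) = a * PhiMap k φ (x ⊗ₜ[k] y) := by
  have diagram : PhiMap k φ ∘ₗ (TensorProduct.lift lact).rTensor (Q ⊗[k] P) =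
      LinearMap.mul' k (S ⊗[k] Sᵐᵒᵖ) ∘ₗ (PhiMap k φ).lTensor (S ⊗[k] Sᵐᵒᵖ) ∘ₗ
        (TensorProduct.assoc k _ _ _).toLinearMap := by
    ext s t p q q' p'
    obtain ⟨s', rfl⟩ := op_surjective t
    simp [hlact, PhiMap_tmul, hleft, hright]
  exact DFunLike.congr_fun diagram ((a ⊗ₜ x) ⊗ₜ y)

theorem PhiMap_rightAction [Module S P] [Module Sᵐᵒᵖ Q]
    (hleft : ∀ (s : S) (p : P) (q : Q), φ (s • p) q = s * φ p q)
    (hright : ∀ (s : S) (p : P) (q : Q), φ p (op s • q) = φ p q * s)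
    {ract : (Q ⊗[k] P) →ₗ[k] (S ⊗[k] Sᵐᵒᵖ) →ₗ[k] (Q ⊗[k] P)}
    (hract : ∀ (s s' : S) (q : Q) (p : P),
      ract (q ⊗ₜ[k] p) (s ⊗ₜ[k] op s') = (op s • q) ⊗ₜ[k] (s' • p))
    (a : S ⊗[k] Sᵐᵒᵖ) (x : P ⊗[k] Q) (y : Q ⊗[k] P) :
    PhiMap k φ (x ⊗ₜ[k] ract y a) = PhiMap k φ (x ⊗ₜ[k] y) * a := by
  have diagram : PhiMap k φ ∘ₗ (TensorProduct.lift ract).lTensor (P ⊗[k] Q) ∘ₗ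
        (TensorProduct.assoc k _ _ _).toLinearMap =
      LinearMap.mul' k (S ⊗[k] Sᵐᵒᵖ) ∘ₗ (PhiMap k φ).rTensor (S ⊗[k] Sᵐᵒᵖ) := by
    ext p q q' p' s t
    obtain ⟨s', rfl⟩ := op_surjective t
    simp [hract, PhiMap_tmul, hleft, hright]
  exact DFunLike.congr_fun diagram ((x ⊗ₜ y) ⊗ₜ a)

theorem leftAction_PhiMap_eq_rightAction_PhiMap
    [Module S P] [Module Rᵐᵒᵖ P] [Module R Q] [Module Sᵐᵒᵖ Q]
    (hP : ∀ (p : P) (q : Q) (p' : P), φ p q • p' = op (ψ q p') • p)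
    (hQ : ∀ (q : Q) (p : P) (q' : Q), ψ q p • q' = op (φ p q') • q)
    {lact : (S ⊗[k] Sᵐᵒᵖ) →ₗ[k] (P ⊗[k] Q) →ₗ[k] (P ⊗[k] Q)}
    (hlact : ∀ (s s' : S) (p : P) (q : Q),
      lact (s ⊗ₜ[k] op s') (p ⊗ₜ[k] q) = (s • p) ⊗ₜ[k] (op s' • q))
    {ract : (P ⊗[k] Q) →ₗ[k] (R ⊗[k] Rᵐᵒᵖ) →ₗ[k] (P ⊗[k] Q)}
    (hract : ∀ (r r' : R) (p : P) (q : Q),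
      ract (p ⊗ₜ[k] q) (r ⊗ₜ[k] op r') = (op r • p) ⊗ₜ[k] (r' • q))
    (x x' : P ⊗[k] Q) (y : Q ⊗[k] P) :
    lact (PhiMap k φ (x ⊗ₜ[k] y)) x' = ract x (PhiMap k ψ (y ⊗ₜ[k] x')) := by
  have diagram : TensorProduct.lift lact ∘ₗ (PhiMap k φ).rTensor (P ⊗[k] Q) =
      TensorProduct.lift ract ∘ₗ (PhiMap k ψ).lTensor (P ⊗[k] Q) ∘ₗ
        (TensorProduct.assoc k _ _ _).toLinearMap := by
    ext p q q₂ p₂ p₁ q₁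
    simp [PhiMap_tmul, hlact, hract, hP, hQ]
  exact DFunLike.congr_fun diagram ((x ⊗ₜ y) ⊗ₜ x')

end Pairing

/-- Let `(R, S, P, Q, φ, ψ)` be a Morita context over `k`.  Set
`P^e := P ⊗_k Q^op`, an `(S ⊗_k S^op, R ⊗_k R^op)`-bimodule via
`(s ⊗ s̃^op)·(p ⊗ q)·(r ⊗ r̃^op) = (s·p·r) ⊗ (r̃·q·s̃)`, and `Q^e := Q ⊗_k P^op`, an
`(R ⊗_k R^op, S ⊗_k S^op)`-bimodule via `(r ⊗ r̃^op)·(q ⊗ p)·(s ⊗ s̃^op) = (r·q·s) ⊗ (s̃·p·r̃)`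
(induced bimodule actions `lactSePe`, `ractRePe`, `lactReQe`, `ractSeQe` below).  Then the
maps `Φ : P^e ⊗_{R^e} Q^e → S ⊗_k S^op` and `Ψ : Q^e ⊗_{S^e} P^e → R ⊗_k R^op` are
well-defined bimodule isomorphisms (the maps on the `k`-tensor products are surjective with
kernel exactly the balancing relations, and are equivariant for the bimodule actions), and
satisfy `Φ(x ⊗ y)·x' = x·Ψ(y ⊗ x')` and `Ψ(y ⊗ x)·y' = y·Φ(x ⊗ y')`; hence
`(R ⊗_k R^op, S ⊗_k S^op, P^e, Q^e, Φ, Ψ)` is again a Morita context. -/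
theorem enveloping_morita_context
    (k R S P Q : Type u) [CommRing k] [Ring R] [Ring S] [Algebra k R] [Algebra k S]
    [AddCommGroup P] [Module k P] [Module S P] [Module Rᵐᵒᵖ P]
    [SMulCommClass S Rᵐᵒᵖ P] [IsScalarTower k S P] [IsScalarTower k Rᵐᵒᵖ P]
    [AddCommGroup Q] [Module k Q] [Module R Q] [Module Sᵐᵒᵖ Q]
    [SMulCommClass R Sᵐᵒᵖ Q] [IsScalarTower k R Q] [IsScalarTower k Sᵐᵒᵖ Q]
    (ctx : MoritaContext k R S P Q)
    -- the four bimodule actions on `P^e` and `Q^e`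
    (lactSePe : (S ⊗[k] Sᵐᵒᵖ) →ₗ[k] (P ⊗[k] Q) →ₗ[k] (P ⊗[k] Q))
    (hlactSePe : ∀ (s s' : S) (p : P) (q : Q),
      lactSePe (s ⊗ₜ[k] op s') (p ⊗ₜ[k] q) = (s • p) ⊗ₜ[k] (op s' • q))
    (ractRePe : (P ⊗[k] Q) →ₗ[k] (R ⊗[k] Rᵐᵒᵖ) →ₗ[k] (P ⊗[k] Q))
    (hractRePe : ∀ (r r' : R) (p : P) (q : Q),
      ractRePe (p ⊗ₜ[k] q) (r ⊗ₜ[k] op r') = (op r • p) ⊗ₜ[k] (r' • q))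
    (lactReQe : (R ⊗[k] Rᵐᵒᵖ) →ₗ[k] (Q ⊗[k] P) →ₗ[k] (Q ⊗[k] P))
    (hlactReQe : ∀ (r r' : R) (q : Q) (p : P),
      lactReQe (r ⊗ₜ[k] op r') (q ⊗ₜ[k] p) = (r • q) ⊗ₜ[k] (op r' • p))
    (ractSeQe : (Q ⊗[k] P) →ₗ[k] (S ⊗[k] Sᵐᵒᵖ) →ₗ[k] (Q ⊗[k] P))
    (hractSeQe : ∀ (s s' : S) (q : Q) (p : P),
      ractSeQe (q ⊗ₜ[k] p) (s ⊗ₜ[k] op s') = (op s • q) ⊗ₜ[k] (s' • p)) :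
    -- `Φ` and `Ψ` descend to well-defined bijections on the balanced tensor products
    LinearMap.ker (PhiMap k ctx.φ) = relPeQe (k := k) (R := R) (P := P) (Q := Q) ∧
    Function.Surjective (PhiMap k ctx.φ) ∧
    LinearMap.ker (PhiMap k ctx.ψ) = relPeQe (k := k) (R := S) (P := Q) (Q := P) ∧
    Function.Surjective (PhiMap k ctx.ψ) ∧
    -- `Φ` is a morphism of `(S^e, S^e)`-bimodules
    (∀ (se : S ⊗[k] Sᵐᵒᵖ) (x : P ⊗[k] Q) (y : Q ⊗[k] P),
      PhiMap k ctx.φ (lactSePe se x ⊗ₜ[k] y)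
        = se * PhiMap k ctx.φ (x ⊗ₜ[k] y)) ∧
    (∀ (se : S ⊗[k] Sᵐᵒᵖ) (x : P ⊗[k] Q) (y : Q ⊗[k] P),
      PhiMap k ctx.φ (x ⊗ₜ[k] ractSeQe y se)
        = PhiMap k ctx.φ (x ⊗ₜ[k] y) * se) ∧
    -- `Ψ` is a morphism of `(R^e, R^e)`-bimodules
    (∀ (re : R ⊗[k] Rᵐᵒᵖ) (y : Q ⊗[k] P) (x : P ⊗[k] Q),
      PhiMap k ctx.ψ (lactReQe re y ⊗ₜ[k] x)
        = re * PhiMap k ctx.ψ (y ⊗ₜ[k] x)) ∧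
    (∀ (re : R ⊗[k] Rᵐᵒᵖ) (y : Q ⊗[k] P) (x : P ⊗[k] Q),
      PhiMap k ctx.ψ (y ⊗ₜ[k] ractRePe x re)
        = PhiMap k ctx.ψ (y ⊗ₜ[k] x) * re) ∧
    -- the Morita compatibility conditions
    (∀ (x x' : P ⊗[k] Q) (y : Q ⊗[k] P),
      lactSePe (PhiMap k ctx.φ (x ⊗ₜ[k] y)) x'
        = ractRePe x (PhiMap k ctx.ψ (y ⊗ₜ[k] x'))) ∧
    (∀ (y y' : Q ⊗[k] P) (x : P ⊗[k] Q),
      lactReQe (PhiMap k ctx.ψ (y ⊗ₜ[k] x)) y'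
        = ractSeQe y (PhiMap k ctx.φ (x ⊗ₜ[k] y'))) := by
  exact ⟨ker_PhiMap ctx.φ_surj ctx.φ_ker,
    PhiMap_surjective ctx.φ_surj,
    ker_PhiMap ctx.ψ_surj ctx.ψ_ker,
    PhiMap_surjective ctx.ψ_surj,
    PhiMap_leftAction ctx.φ_left ctx.φ_right hlactSePe,
    PhiMap_rightAction ctx.φ_left ctx.φ_right hractSeQe,
    PhiMap_leftAction ctx.ψ_left ctx.ψ_right hlactReQe,
    PhiMap_rightAction ctx.ψ_left ctx.ψ_right hractRePe,
    leftAction_PhiMap_eq_rightAction_PhiMap ctx.assoc_φψ ctx.assoc_ψφ hlactSePe hractRePe,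
    leftAction_PhiMap_eq_rightAction_PhiMap ctx.assoc_ψφ ctx.assoc_φψ hlactReQe hractSeQe⟩
end

section
/- Let (R,S,P,Q,φ,ψ) be a Morita context over k, and let X and Y be (S,S)-bimodules with symmetric k-action. Then the map ((q ⊗ x ⊗ p) ⊗ (q' ⊗ y ⊗ p')) ↦ q ⊗ (x·φ(p ⊗ q') ⊗ y) ⊗ p' defines a well-defined isomorphism of (R,R)-bimodules (Q ⊗_S X ⊗_S P) ⊗_R (Q ⊗_S Y ⊗_S P) → Q ⊗_S (X ⊗_S Y) ⊗_S P, with inverse given by q ⊗ (x ⊗ y) ⊗ p ↦ Σ_j (q ⊗ x ⊗ p'_j) ⊗ (q'_j ⊗ y ⊗ p). -/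
open scoped TensorProduct
open MulOpposite

set_option maxSynthPendingDepth 5

universe u

section TensorSix

variable (k R S P Q X Y : Type u) [CommRing k] [Ring R] [Ring S] [Algebra k R] [Algebra k S]
    [AddCommGroup P] [Module k P] [Module S P] [Module Rᵐᵒᵖ P]
    [AddCommGroup Q] [Module k Q] [Module R Q] [Module Sᵐᵒᵖ Q]
    [AddCommGroup X] [Module k X] [Module S X] [Module Sᵐᵒᵖ X]
    [AddCommGroup Y] [Module k Y] [Module S Y] [Module Sᵐᵒᵖ Y]

/-- The `k`-tensor product `Q ⊗ X ⊗ P ⊗ Q ⊗ Y ⊗ P` underlying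
`(Q ⊗_S X ⊗_S P) ⊗_R (Q ⊗_S Y ⊗_S P)`. -/
abbrev SixFold :=
  Q ⊗[k] (X ⊗[k] (P ⊗[k] (Q ⊗[k] (Y ⊗[k] P))))

/-- The balancing relations realizing `(Q ⊗_S X ⊗_S P) ⊗_R (Q ⊗_S Y ⊗_S P)` as a quotient of
the six-fold `k`-tensor product: `S`-balancing at the four junctions `Q–X`, `X–P`, `Q–Y`,
`Y–P` and `R`-balancing at the middle junction `P–Q`. -/
def sixRel : Submodule k (SixFold k P Q X Y) :=
  Submodule.span k
    ({z | ∃ (s : S) (q : Q) (x : X) (p : P) (q' : Q) (y : Y) (p' : P),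
        z = (op s • q) ⊗ₜ[k] (x ⊗ₜ[k] (p ⊗ₜ[k] (q' ⊗ₜ[k] (y ⊗ₜ[k] p'))))
          - q ⊗ₜ[k] ((s • x) ⊗ₜ[k] (p ⊗ₜ[k] (q' ⊗ₜ[k] (y ⊗ₜ[k] p'))))} ∪
     {z | ∃ (s : S) (q : Q) (x : X) (p : P) (q' : Q) (y : Y) (p' : P),
        z = q ⊗ₜ[k] ((op s • x) ⊗ₜ[k] (p ⊗ₜ[k] (q' ⊗ₜ[k] (y ⊗ₜ[k] p'))))
          - q ⊗ₜ[k] (x ⊗ₜ[k] ((s • p) ⊗ₜ[k] (q' ⊗ₜ[k] (y ⊗ₜ[k] p'))))} ∪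
     {z | ∃ (r : R) (q : Q) (x : X) (p : P) (q' : Q) (y : Y) (p' : P),
        z = q ⊗ₜ[k] (x ⊗ₜ[k] ((op r • p) ⊗ₜ[k] (q' ⊗ₜ[k] (y ⊗ₜ[k] p'))))
          - q ⊗ₜ[k] (x ⊗ₜ[k] (p ⊗ₜ[k] ((r • q') ⊗ₜ[k] (y ⊗ₜ[k] p'))))} ∪
     {z | ∃ (s : S) (q : Q) (x : X) (p : P) (q' : Q) (y : Y) (p' : P),
        z = q ⊗ₜ[k] (x ⊗ₜ[k] (p ⊗ₜ[k] ((op s • q') ⊗ₜ[k] (y ⊗ₜ[k] p'))))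
          - q ⊗ₜ[k] (x ⊗ₜ[k] (p ⊗ₜ[k] (q' ⊗ₜ[k] ((s • y) ⊗ₜ[k] p'))))} ∪
     {z | ∃ (s : S) (q : Q) (x : X) (p : P) (q' : Q) (y : Y) (p' : P),
        z = q ⊗ₜ[k] (x ⊗ₜ[k] (p ⊗ₜ[k] (q' ⊗ₜ[k] ((op s • y) ⊗ₜ[k] p'))))
          - q ⊗ₜ[k] (x ⊗ₜ[k] (p ⊗ₜ[k] (q' ⊗ₜ[k] (y ⊗ₜ[k] (s • p')))))})

/-- The `k`-tensor product `Q ⊗ (X ⊗ Y) ⊗ P` underlying `Q ⊗_S (X ⊗_S Y) ⊗_S P`. -/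
abbrev ThreeFold := Q ⊗[k] ((X ⊗[k] Y) ⊗[k] P)

/-- The balancing relations realizing `Q ⊗_S (X ⊗_S Y) ⊗_S P` as a quotient of
`Q ⊗[k] ((X ⊗[k] Y) ⊗[k] P)`. -/
def threeRel : Submodule k (ThreeFold k P Q X Y) :=
  Submodule.span k
    ({z | ∃ (s : S) (q : Q) (x : X) (y : Y) (p : P),
        z = (op s • q) ⊗ₜ[k] ((x ⊗ₜ[k] y) ⊗ₜ[k] p)
          - q ⊗ₜ[k] (((s • x) ⊗ₜ[k] y) ⊗ₜ[k] p)} ∪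
     {z | ∃ (s : S) (q : Q) (x : X) (y : Y) (p : P),
        z = q ⊗ₜ[k] (((op s • x) ⊗ₜ[k] y) ⊗ₜ[k] p)
          - q ⊗ₜ[k] ((x ⊗ₜ[k] (s • y)) ⊗ₜ[k] p)} ∪
     {z | ∃ (s : S) (q : Q) (x : X) (y : Y) (p : P),
        z = q ⊗ₜ[k] ((x ⊗ₜ[k] (op s • y)) ⊗ₜ[k] p)
          - q ⊗ₜ[k] ((x ⊗ₜ[k] y) ⊗ₜ[k] (s • p))})

end TensorSix

/-!
Write `[q, x, t, y, p]` for the class of `q ⊗ x ⊗ t ⊗ y ⊗ p` in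
`(Q ⊗_S X ⊗_S P) ⊗_R (Q ⊗_S Y ⊗_S P)`, where `t ∈ P ⊗ Q`. Since `φ` is injective on `P ⊗_R Q`,
this class depends on `t` only through `φ t`; and `S`-balancing turns `x·s` into `s·t` and `s·y`
into `t·s`. For `t` with `φ t = 1` both `s·t` and `t·s` are sent to `s`, so that
`q ⊗ (x ⊗ y) ⊗ p ↦ [q, x, t, y, p]` respects the balancing at the junction `X–Y`, and
`[q, x·φ(p ⊗ q'), t, y, p'] = [q, x, p ⊗ q', y, p']`, which makes it inverse to contraction by `φ`.
-/

theorem midRel_le_ker_iff {k A M N : Type u} {T : Type*} [CommRing k] [Ring A] [Algebra k A]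
    [AddCommGroup M] [Module k M] [Module Aᵐᵒᵖ M]
    [AddCommGroup N] [Module k N] [Module A N] [AddCommGroup T] [Module k T]
    {f : M ⊗[k] N →ₗ[k] T} :
    midRel k A M N ≤ LinearMap.ker f ↔
      ∀ (m : M) (a : A) (n : N), f ((op a • m) ⊗ₜ[k] n) = f (m ⊗ₜ[k] (a • n)) := by
  rw [midRel, Submodule.span_le]
  constructor
  · intro h m a n
    simpa [sub_eq_zero] using h ⟨m, a, n, rfl⟩
  · rintro h _ ⟨m, a, n, rfl⟩
    simpa [sub_eq_zero] using h m a n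

section Balancing

variable {k R S P Q X Y : Type u} {T : Type*} [CommRing k] [Ring R] [Ring S]
    [AddCommGroup P] [Module k P] [Module S P] [Module Rᵐᵒᵖ P]
    [AddCommGroup Q] [Module k Q] [Module R Q] [Module Sᵐᵒᵖ Q]
    [AddCommGroup X] [Module k X] [Module S X] [Module Sᵐᵒᵖ X]
    [AddCommGroup Y] [Module k Y] [Module S Y] [Module Sᵐᵒᵖ Y]
    [AddCommGroup T] [Module k T]

variable (R S) in
/-- A linear map on `Q ⊗ X ⊗ P ⊗ Q ⊗ Y ⊗ P` is balanced if it satisfies the relations defining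
`(Q ⊗_S X ⊗_S P) ⊗_R (Q ⊗_S Y ⊗_S P)`; each field is named after the junction it concerns. -/
structure IsSixBalanced (f : SixFold k P Q X Y →ₗ[k] T) : Prop where
  QX : ∀ (s : S) (q : Q) (x : X) (p : P) (q' : Q) (y : Y) (p' : P),
    f ((op s • q) ⊗ₜ (x ⊗ₜ (p ⊗ₜ (q' ⊗ₜ (y ⊗ₜ p'))))) =
      f (q ⊗ₜ ((s • x) ⊗ₜ (p ⊗ₜ (q' ⊗ₜ (y ⊗ₜ p')))))
  XP : ∀ (s : S) (q : Q) (x : X) (p : P) (q' : Q) (y : Y) (p' : P),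
    f (q ⊗ₜ ((op s • x) ⊗ₜ (p ⊗ₜ (q' ⊗ₜ (y ⊗ₜ p'))))) =
      f (q ⊗ₜ (x ⊗ₜ ((s • p) ⊗ₜ (q' ⊗ₜ (y ⊗ₜ p')))))
  PQ : ∀ (r : R) (q : Q) (x : X) (p : P) (q' : Q) (y : Y) (p' : P),
    f (q ⊗ₜ (x ⊗ₜ ((op r • p) ⊗ₜ (q' ⊗ₜ (y ⊗ₜ p'))))) =
      f (q ⊗ₜ (x ⊗ₜ (p ⊗ₜ ((r • q') ⊗ₜ (y ⊗ₜ p')))))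
  QY : ∀ (s : S) (q : Q) (x : X) (p : P) (q' : Q) (y : Y) (p' : P),
    f (q ⊗ₜ (x ⊗ₜ (p ⊗ₜ ((op s • q') ⊗ₜ (y ⊗ₜ p'))))) =
      f (q ⊗ₜ (x ⊗ₜ (p ⊗ₜ (q' ⊗ₜ ((s • y) ⊗ₜ p')))))
  YP : ∀ (s : S) (q : Q) (x : X) (p : P) (q' : Q) (y : Y) (p' : P),
    f (q ⊗ₜ (x ⊗ₜ (p ⊗ₜ (q' ⊗ₜ ((op s • y) ⊗ₜ p'))))) =
      f (q ⊗ₜ (x ⊗ₜ (p ⊗ₜ (q' ⊗ₜ (y ⊗ₜ (s • p'))))))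

variable (S) in
/-- A linear map on `Q ⊗ (X ⊗ Y) ⊗ P` is balanced if it satisfies the relations defining
`Q ⊗_S (X ⊗_S Y) ⊗_S P`; each field is named after the junction it concerns. -/
structure IsThreeBalanced (f : ThreeFold k P Q X Y →ₗ[k] T) : Prop where
  QX : ∀ (s : S) (q : Q) (x : X) (y : Y) (p : P),
    f ((op s • q) ⊗ₜ ((x ⊗ₜ y) ⊗ₜ p)) = f (q ⊗ₜ (((s • x) ⊗ₜ y) ⊗ₜ p))
  XY : ∀ (s : S) (q : Q) (x : X) (y : Y) (p : P),
    f (q ⊗ₜ (((op s • x) ⊗ₜ y) ⊗ₜ p)) = f (q ⊗ₜ ((x ⊗ₜ (s • y)) ⊗ₜ p))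
  YP : ∀ (s : S) (q : Q) (x : X) (y : Y) (p : P),
    f (q ⊗ₜ ((x ⊗ₜ (op s • y)) ⊗ₜ p)) = f (q ⊗ₜ ((x ⊗ₜ y) ⊗ₜ (s • p)))

theorem sixRel_le_ker_iff {f : SixFold k P Q X Y →ₗ[k] T} :
    sixRel k R S P Q X Y ≤ LinearMap.ker f ↔ IsSixBalanced R S f := by
  simp only [sixRel, Submodule.span_le, Set.union_subset_iff]
  constructor
  · rintro ⟨⟨⟨⟨hQX, hXP⟩, hPQ⟩, hQY⟩, hYP⟩
    constructor <;> intros <;> rw [← sub_eq_zero, ← map_sub]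
    · exact hQX ⟨_, _, _, _, _, _, _, rfl⟩
    · exact hXP ⟨_, _, _, _, _, _, _, rfl⟩
    · exact hPQ ⟨_, _, _, _, _, _, _, rfl⟩
    · exact hQY ⟨_, _, _, _, _, _, _, rfl⟩
    · exact hYP ⟨_, _, _, _, _, _, _, rfl⟩
  · intro h
    refine ⟨⟨⟨⟨?_, ?_⟩, ?_⟩, ?_⟩, ?_⟩ <;> rintro _ ⟨s, q, x, p, q', y, p', rfl⟩ <;>
      rw [SetLike.mem_coe, LinearMap.sub_mem_ker_iff]
    exacts [h.QX .., h.XP .., h.PQ .., h.QY .., h.YP ..]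

theorem sixFold_quotient_ext
    {f g : (SixFold k P Q X Y ⧸ sixRel k R S P Q X Y) →ₗ[k] T}
    (h : ∀ (q : Q) (x : X) (p : P) (q' : Q) (y : Y) (p' : P),
      f (Submodule.Quotient.mk (q ⊗ₜ (x ⊗ₜ (p ⊗ₜ (q' ⊗ₜ (y ⊗ₜ p')))))) =
        g (Submodule.Quotient.mk (q ⊗ₜ (x ⊗ₜ (p ⊗ₜ (q' ⊗ₜ (y ⊗ₜ p'))))))) :
    f = g := by
  ext q x p q' y p'
  exact h q x p q' y p'

theorem threeRel_le_ker_iff {f : ThreeFold k P Q X Y →ₗ[k] T} :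
    threeRel k S P Q X Y ≤ LinearMap.ker f ↔ IsThreeBalanced S f := by
  simp only [threeRel, Submodule.span_le, Set.union_subset_iff]
  constructor
  · rintro ⟨⟨hQX, hXY⟩, hYP⟩
    constructor <;> intros <;> rw [← sub_eq_zero, ← map_sub]
    · exact hQX ⟨_, _, _, _, _, rfl⟩
    · exact hXY ⟨_, _, _, _, _, rfl⟩
    · exact hYP ⟨_, _, _, _, _, rfl⟩
  · intro h
    refine ⟨⟨?_, ?_⟩, ?_⟩ <;> rintro _ ⟨s, q, x, y, p, rfl⟩ <;>
      rw [SetLike.mem_coe, LinearMap.sub_mem_ker_iff]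
    exacts [h.QX .., h.XY .., h.YP ..]

theorem threeFold_quotient_ext
    {f g : (ThreeFold k P Q X Y ⧸ threeRel k S P Q X Y) →ₗ[k] T}
    (h : ∀ (q : Q) (x : X) (y : Y) (p : P),
      f (Submodule.Quotient.mk (q ⊗ₜ ((x ⊗ₜ y) ⊗ₜ p))) =
        g (Submodule.Quotient.mk (q ⊗ₜ ((x ⊗ₜ y) ⊗ₜ p)))) :
    f = g := by
  ext q x y p
  exact h q x y p

end Balancing

section MiddleFactor

variable {k S P Q X Y : Type u} [CommRing k] [Ring S] [Algebra k S]
    [AddCommGroup P] [Module k P] [AddCommGroup Q] [Module k Q]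
    [AddCommGroup X] [Module k X] [AddCommGroup Y] [Module k Y]

/-- The insertion `q ⊗ (x ⊗ y) ⊗ p ↦ q ⊗ x ⊗ t ⊗ y ⊗ p` of a middle factor `t`, linear in `t`. -/
noncomputable def insertMiddle : P ⊗[k] Q →ₗ[k] ThreeFold k P Q X Y →ₗ[k] SixFold k P Q X Y :=
  LinearMap.lTensorHom Q ∘ₗ
    LinearMap.lcomp k _ (TensorProduct.assoc k X Y P).toLinearMap ∘ₗ
    LinearMap.lTensorHom X ∘ₗ
    LinearMap.compRight k (TensorProduct.assoc k P Q (Y ⊗[k] P)).toLinearMap ∘ₗ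
    TensorProduct.mk k (P ⊗[k] Q) (Y ⊗[k] P)

theorem insertMiddle_tmul (p : P) (q' : Q) (q : Q) (x : X) (y : Y) (p' : P) :
    insertMiddle (p ⊗ₜ[k] q') (q ⊗ₜ ((x ⊗ₜ y) ⊗ₜ p')) =
      q ⊗ₜ (x ⊗ₜ (p ⊗ₜ (q' ⊗ₜ (y ⊗ₜ p')))) := rfl

variable [Module Sᵐᵒᵖ X] [IsScalarTower k Sᵐᵒᵖ X]

/-- The contraction `q ⊗ x ⊗ p ⊗ q' ⊗ y ⊗ p' ↦ q ⊗ (x·φ(p ⊗ q') ⊗ y) ⊗ p'` before passing to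
balanced tensor products. -/
noncomputable def contractMiddle (φ : P →ₗ[k] Q →ₗ[k] S) :
    SixFold k P Q X Y →ₗ[k] ThreeFold k P Q X Y :=
  let rightMul : X →ₗ[k] S →ₗ[k] X :=
    ((Algebra.lsmul k k X).toLinearMap ∘ₗ (opLinearEquiv k (M := S)).toLinearMap).flip
  LinearMap.lTensor Q
    ((TensorProduct.assoc k X Y P).symm.toLinearMap ∘ₗ
      LinearMap.rTensor (Y ⊗[k] P)
        (TensorProduct.lift (rightMul.compl₂ (TensorProduct.lift φ))) ∘ₗ
      (TensorProduct.assoc k X (P ⊗[k] Q) (Y ⊗[k] P)).symm.toLinearMap ∘ₗ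
      LinearMap.lTensor X (TensorProduct.assoc k P Q (Y ⊗[k] P)).symm.toLinearMap)

theorem contractMiddle_tmul (φ : P →ₗ[k] Q →ₗ[k] S)
    (q : Q) (x : X) (p : P) (q' : Q) (y : Y) (p' : P) :
    contractMiddle φ (q ⊗ₜ (x ⊗ₜ (p ⊗ₜ (q' ⊗ₜ (y ⊗ₜ p'))))) =
      q ⊗ₜ (((op (φ p q') • x) ⊗ₜ y) ⊗ₜ p') := rfl

theorem contractMiddle_insertMiddle (φ : P →ₗ[k] Q →ₗ[k] S) (t : P ⊗[k] Q)
    (q : Q) (x : X) (y : Y) (p : P) :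
    contractMiddle φ (insertMiddle t (q ⊗ₜ ((x ⊗ₜ y) ⊗ₜ p))) =
      q ⊗ₜ (((op (TensorProduct.lift φ t) • x) ⊗ₜ y) ⊗ₜ p) := by
  induction t with
  | zero => simp
  | tmul => rfl
  | add t t' ht ht' =>
    simp only [map_add, LinearMap.add_apply, ht, ht', op_add, add_smul,
      TensorProduct.add_tmul, TensorProduct.tmul_add]

end MiddleFactor

section Pairing

variable {k S P Q : Type u} [CommRing k] [Ring S] [Algebra k S]
    [AddCommGroup P] [Module k P] [AddCommGroup Q] [Module k Q] {φ : P →ₗ[k] Q →ₗ[k] S}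

theorem lift_smul_eq_mul [Module S P] [IsScalarTower k S P]
    (hφl : ∀ (s : S) (p : P) (q : Q), φ (s • p) q = s * φ p q) (s : S) (t : P ⊗[k] Q) :
    TensorProduct.lift φ (s • t) = s * TensorProduct.lift φ t := by
  induction t with
  | zero => simp
  | tmul p q => exact hφl s p q
  | add t t' ht ht' => rw [smul_add, map_add, map_add, ht, ht', mul_add]

theorem lift_lTensor_op_smul_eq_mul [Module Sᵐᵒᵖ Q] [IsScalarTower k Sᵐᵒᵖ Q]
    (hφr : ∀ (s : S) (p : P) (q : Q), φ p (op s • q) = φ p q * s) (s : S) (t : P ⊗[k] Q) :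
    TensorProduct.lift φ ((DistribSMul.toLinearMap k Q (op s)).lTensor P t) =
      TensorProduct.lift φ t * s := by
  induction t with
  | zero => simp
  | tmul p q => exact hφr s p q
  | add t t' ht ht' => rw [map_add, map_add, map_add, ht, ht', add_mul]

end Pairing

section Descent

variable {k R S P Q X Y : Type u} {T : Type*} [CommRing k] [Ring R] [Ring S]
    [AddCommGroup P] [Module k P] [Module S P] [Module Rᵐᵒᵖ P]
    [AddCommGroup Q] [Module k Q] [Module R Q] [Module Sᵐᵒᵖ Q]
    [AddCommGroup X] [Module k X] [Module S X] [Module Sᵐᵒᵖ X]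
    [AddCommGroup Y] [Module k Y] [Module S Y] [Module Sᵐᵒᵖ Y]
    [AddCommGroup T] [Module k T]

namespace IsSixBalanced

variable {f : SixFold k P Q X Y →ₗ[k] T}

theorem insertMiddle_QX (hf : IsSixBalanced R S f) (t : P ⊗[k] Q)
    (s : S) (q : Q) (x : X) (y : Y) (p : P) :
    f (insertMiddle t ((op s • q) ⊗ₜ ((x ⊗ₜ y) ⊗ₜ p))) =
      f (insertMiddle t (q ⊗ₜ (((s • x) ⊗ₜ y) ⊗ₜ p))) := by
  induction t with
  | zero => simp
  | tmul p₁ q₁ => exact hf.QX s q x p₁ q₁ y p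
  | add t t' ht ht' => simp only [map_add, LinearMap.add_apply, ht, ht']

theorem insertMiddle_YP (hf : IsSixBalanced R S f) (t : P ⊗[k] Q)
    (s : S) (q : Q) (x : X) (y : Y) (p : P) :
    f (insertMiddle t (q ⊗ₜ ((x ⊗ₜ (op s • y)) ⊗ₜ p))) =
      f (insertMiddle t (q ⊗ₜ ((x ⊗ₜ y) ⊗ₜ (s • p)))) := by
  induction t with
  | zero => simp
  | tmul p₁ q₁ => exact hf.YP s q x p₁ q₁ y p
  | add t t' ht ht' => simp only [map_add, LinearMap.add_apply, ht, ht']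

variable [Algebra k S]

theorem insertMiddle_XP [IsScalarTower k S P]
    (hf : IsSixBalanced R S f) (t : P ⊗[k] Q) (s : S) (q : Q) (x : X) (y : Y) (p : P) :
    f (insertMiddle t (q ⊗ₜ (((op s • x) ⊗ₜ y) ⊗ₜ p))) =
      f (insertMiddle (s • t) (q ⊗ₜ ((x ⊗ₜ y) ⊗ₜ p))) := by
  induction t with
  | zero => simp
  | tmul p₁ q₁ => exact hf.XP s q x p₁ q₁ y p
  | add t t' ht ht' => simp only [smul_add, map_add, LinearMap.add_apply, ht, ht']

theorem insertMiddle_QY [IsScalarTower k Sᵐᵒᵖ Q]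
    (hf : IsSixBalanced R S f) (t : P ⊗[k] Q) (s : S) (q : Q) (x : X) (y : Y) (p : P) :
    f (insertMiddle ((DistribSMul.toLinearMap k Q (op s)).lTensor P t)
        (q ⊗ₜ ((x ⊗ₜ y) ⊗ₜ p))) =
      f (insertMiddle t (q ⊗ₜ ((x ⊗ₜ (s • y)) ⊗ₜ p))) := by
  induction t with
  | zero => simp
  | tmul p₁ q₁ => exact hf.QY s q x p₁ q₁ y p
  | add t t' ht ht' => simp only [map_add, LinearMap.add_apply, ht, ht']

variable [Algebra k R] {φ : P →ₗ[k] Q →ₗ[k] S}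

theorem insertMiddle_congr (hf : IsSixBalanced R S f)
    (hφker : LinearMap.ker (TensorProduct.lift φ) ≤ midRel k R P Q) {t t' : P ⊗[k] Q}
    (h : TensorProduct.lift φ t = TensorProduct.lift φ t') (w : ThreeFold k P Q X Y) :
    f (insertMiddle t w) = f (insertMiddle t' w) := by
  have hmid : midRel k R P Q ≤
      LinearMap.ker (LinearMap.compRight k f ∘ₗ insertMiddle (X := X) (Y := Y)) := by
    refine midRel_le_ker_iff.2 fun p₁ r q₁ => ?_
    ext q x y p
    exact hf.PQ r q x p₁ q₁ y p
  have hker : t - t' ∈ LinearMap.ker (LinearMap.compRight k f ∘ₗ insertMiddle) :=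
    hmid (hφker (LinearMap.sub_mem_ker_iff.2 h))
  exact LinearMap.congr_fun (LinearMap.sub_mem_ker_iff.1 hker) w

theorem comp_insertMiddle [IsScalarTower k S P] [IsScalarTower k Sᵐᵒᵖ Q]
    (hf : IsSixBalanced R S f)
    (hφl : ∀ (s : S) (p : P) (q : Q), φ (s • p) q = s * φ p q)
    (hφr : ∀ (s : S) (p : P) (q : Q), φ p (op s • q) = φ p q * s)
    (hφker : LinearMap.ker (TensorProduct.lift φ) ≤ midRel k R P Q) {t : P ⊗[k] Q}
    (ht : TensorProduct.lift φ t = 1) :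
    IsThreeBalanced S (f ∘ₗ insertMiddle t) where
  QX := hf.insertMiddle_QX t
  XY s q x y p := by
    have hst : TensorProduct.lift φ (s • t) =
        TensorProduct.lift φ ((DistribSMul.toLinearMap k Q (op s)).lTensor P t) := by
      rw [lift_smul_eq_mul hφl, lift_lTensor_op_smul_eq_mul hφr, ht, mul_one, one_mul]
    simp only [LinearMap.comp_apply]
    rw [hf.insertMiddle_XP, hf.insertMiddle_congr hφker hst, hf.insertMiddle_QY]
  YP := hf.insertMiddle_YP t

theorem insertMiddle_contractMiddle [IsScalarTower k S P] [IsScalarTower k Sᵐᵒᵖ X]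
    (hf : IsSixBalanced R S f)
    (hφl : ∀ (s : S) (p : P) (q : Q), φ (s • p) q = s * φ p q)
    (hφker : LinearMap.ker (TensorProduct.lift φ) ≤ midRel k R P Q) {t : P ⊗[k] Q}
    (ht : TensorProduct.lift φ t = 1) (q : Q) (x : X) (p : P) (q' : Q) (y : Y) (p' : P) :
    f (insertMiddle t (contractMiddle φ (q ⊗ₜ (x ⊗ₜ (p ⊗ₜ (q' ⊗ₜ (y ⊗ₜ p'))))))) =
      f (q ⊗ₜ (x ⊗ₜ (p ⊗ₜ (q' ⊗ₜ (y ⊗ₜ p'))))) := by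
  have hpq : TensorProduct.lift φ (φ p q' • t) = TensorProduct.lift φ (p ⊗ₜ q') := by
    rw [lift_smul_eq_mul hφl, ht, mul_one, TensorProduct.lift.tmul]
  rw [contractMiddle_tmul, hf.insertMiddle_XP, hf.insertMiddle_congr hφker hpq, insertMiddle_tmul]

end IsSixBalanced

variable [Algebra k S]

theorem IsThreeBalanced.comp_contractMiddle
    [SMulCommClass S Sᵐᵒᵖ X] [IsScalarTower k Sᵐᵒᵖ X]
    {φ : P →ₗ[k] Q →ₗ[k] S} {g : ThreeFold k P Q X Y →ₗ[k] T}
    (hg : IsThreeBalanced S g)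
    (hφl : ∀ (s : S) (p : P) (q : Q), φ (s • p) q = s * φ p q)
    (hφr : ∀ (s : S) (p : P) (q : Q), φ p (op s • q) = φ p q * s)
    (hφbal : ∀ (p : P) (r : R) (q : Q), φ (op r • p) q = φ p (r • q)) :
    IsSixBalanced R S (g ∘ₗ contractMiddle φ) := by
  constructor <;> intros <;> simp only [LinearMap.comp_apply, contractMiddle_tmul]
  · rw [hg.QX, smul_comm]
  · rw [hφl, op_mul, mul_smul]
  · rw [hφbal]
  · rw [hφr, op_mul, mul_smul, hg.XY]
  · rw [hg.YP]

variable [Algebra k R] {φ : P →ₗ[k] Q →ₗ[k] S} {t : P ⊗[k] Q}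
    [IsScalarTower k S P] [IsScalarTower k Sᵐᵒᵖ Q] [SMulCommClass S Sᵐᵒᵖ X] [IsScalarTower k Sᵐᵒᵖ X]
    (hφl : ∀ (s : S) (p : P) (q : Q), φ (s • p) q = s * φ p q)
    (hφr : ∀ (s : S) (p : P) (q : Q), φ p (op s • q) = φ p q * s)
    (hφker : LinearMap.ker (TensorProduct.lift φ) = midRel k R P Q)
    (ht : TensorProduct.lift φ t = 1)

/-- The isomorphism `(Q ⊗_S X ⊗_S P) ⊗_R (Q ⊗_S Y ⊗_S P) ≃ Q ⊗_S (X ⊗_S Y) ⊗_S P` induced by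
`contractMiddle φ`, for an `(S,S)`-bilinear pairing `φ` that is injective on `P ⊗_R Q`. Its inverse
inserts any `t` with `φ t = 1`. -/
noncomputable def contractMiddleEquiv :
    (SixFold k P Q X Y ⧸ sixRel k R S P Q X Y) ≃ₗ[k]
      (ThreeFold k P Q X Y ⧸ threeRel k S P Q X Y) :=
  have hsix : IsSixBalanced R S (sixRel k R S P Q X Y).mkQ :=
    sixRel_le_ker_iff.1 (Submodule.ker_mkQ _).ge
  have hthree : IsThreeBalanced S (threeRel k S P Q X Y).mkQ :=
    threeRel_le_ker_iff.1 (Submodule.ker_mkQ _).ge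
  LinearEquiv.ofLinearMap
    ((sixRel k R S P Q X Y).liftQ _ (sixRel_le_ker_iff.2
      (hthree.comp_contractMiddle hφl hφr (midRel_le_ker_iff.1 hφker.ge))))
    ((threeRel k S P Q X Y).liftQ _ (threeRel_le_ker_iff.2
      (hsix.comp_insertMiddle hφl hφr hφker.le ht)))
    (threeFold_quotient_ext fun q x y p => congrArg (threeRel k S P Q X Y).mkQ <|
      (contractMiddle_insertMiddle φ t q x y p).trans (by rw [ht, op_one, one_smul]))
    (sixFold_quotient_ext (hsix.insertMiddle_contractMiddle hφl hφker.le ht))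

theorem contractMiddleEquiv_mk_tmul (q : Q) (x : X) (p : P) (q' : Q) (y : Y) (p' : P) :
    contractMiddleEquiv hφl hφr hφker ht
        (Submodule.Quotient.mk (q ⊗ₜ (x ⊗ₜ (p ⊗ₜ (q' ⊗ₜ (y ⊗ₜ p')))))) =
      Submodule.Quotient.mk (q ⊗ₜ (((op (φ p q') • x) ⊗ₜ y) ⊗ₜ p')) := rfl

theorem contractMiddleEquiv_symm_mk (w : ThreeFold k P Q X Y) :
    (contractMiddleEquiv hφl hφr hφker ht).symm (Submodule.Quotient.mk w) =
      Submodule.Quotient.mk (insertMiddle t w) := rfl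

end Descent

theorem monoidal_structure_iso_general
    {k R S P Q X Y : Type u} [CommRing k] [Ring R] [Ring S] [Algebra k R] [Algebra k S]
    [AddCommGroup P] [Module k P] [Module S P] [Module Rᵐᵒᵖ P] [IsScalarTower k S P]
    [AddCommGroup Q] [Module k Q] [Module R Q] [Module Sᵐᵒᵖ Q] [IsScalarTower k Sᵐᵒᵖ Q]
    [AddCommGroup X] [Module k X] [Module S X] [Module Sᵐᵒᵖ X]
    [SMulCommClass S Sᵐᵒᵖ X] [IsScalarTower k Sᵐᵒᵖ X]
    [AddCommGroup Y] [Module k Y] [Module S Y] [Module Sᵐᵒᵖ Y]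
    {φ : P →ₗ[k] Q →ₗ[k] S}
    (hφl : ∀ (s : S) (p : P) (q : Q), φ (s • p) q = s * φ p q)
    (hφr : ∀ (s : S) (p : P) (q : Q), φ p (op s • q) = φ p q * s)
    (hφker : LinearMap.ker (TensorProduct.lift φ) = midRel k R P Q)
    {κ : Type*} [Fintype κ] {pJ : κ → P} {qJ : κ → Q}
    (hJ : ∑ j : κ, φ (pJ j) (qJ j) = 1)
    {lactL ractL : R → (SixFold k P Q X Y ⧸ sixRel k R S P Q X Y)
      →ₗ[k] (SixFold k P Q X Y ⧸ sixRel k R S P Q X Y)}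
    {lactR ractR : R → (ThreeFold k P Q X Y ⧸ threeRel k S P Q X Y)
      →ₗ[k] (ThreeFold k P Q X Y ⧸ threeRel k S P Q X Y)}
    (hlactL : ∀ (r : R) (q : Q) (x : X) (p : P) (q' : Q) (y : Y) (p' : P),
      lactL r (Submodule.Quotient.mk (q ⊗ₜ (x ⊗ₜ (p ⊗ₜ (q' ⊗ₜ (y ⊗ₜ p')))))) =
        Submodule.Quotient.mk ((r • q) ⊗ₜ (x ⊗ₜ (p ⊗ₜ (q' ⊗ₜ (y ⊗ₜ p'))))))
    (hractL : ∀ (r : R) (q : Q) (x : X) (p : P) (q' : Q) (y : Y) (p' : P),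
      ractL r (Submodule.Quotient.mk (q ⊗ₜ (x ⊗ₜ (p ⊗ₜ (q' ⊗ₜ (y ⊗ₜ p')))))) =
        Submodule.Quotient.mk (q ⊗ₜ (x ⊗ₜ (p ⊗ₜ (q' ⊗ₜ (y ⊗ₜ (op r • p')))))))
    (hlactR : ∀ (r : R) (q : Q) (x : X) (y : Y) (p : P),
      lactR r (Submodule.Quotient.mk (q ⊗ₜ ((x ⊗ₜ y) ⊗ₜ p))) =
        Submodule.Quotient.mk ((r • q) ⊗ₜ ((x ⊗ₜ y) ⊗ₜ p)))
    (hractR : ∀ (r : R) (q : Q) (x : X) (y : Y) (p : P),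
      ractR r (Submodule.Quotient.mk (q ⊗ₜ ((x ⊗ₜ y) ⊗ₜ p))) =
        Submodule.Quotient.mk (q ⊗ₜ ((x ⊗ₜ y) ⊗ₜ (op r • p)))) :
    ∃ (F : (SixFold k P Q X Y ⧸ sixRel k R S P Q X Y)
        →ₗ[k] (ThreeFold k P Q X Y ⧸ threeRel k S P Q X Y))
      (G : (ThreeFold k P Q X Y ⧸ threeRel k S P Q X Y)
        →ₗ[k] (SixFold k P Q X Y ⧸ sixRel k R S P Q X Y)),
      (∀ (q : Q) (x : X) (p : P) (q' : Q) (y : Y) (p' : P),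
        F (Submodule.Quotient.mk (q ⊗ₜ (x ⊗ₜ (p ⊗ₜ (q' ⊗ₜ (y ⊗ₜ p')))))) =
          Submodule.Quotient.mk (q ⊗ₜ (((op (φ p q') • x) ⊗ₜ y) ⊗ₜ p'))) ∧
      (∀ (q : Q) (x : X) (y : Y) (p : P),
        G (Submodule.Quotient.mk (q ⊗ₜ ((x ⊗ₜ y) ⊗ₜ p))) =
          ∑ j : κ, Submodule.Quotient.mk
            (q ⊗ₜ (x ⊗ₜ (pJ j ⊗ₜ (qJ j ⊗ₜ (y ⊗ₜ p)))))) ∧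
      F.comp G = LinearMap.id ∧ G.comp F = LinearMap.id ∧
      (∀ (r : R) (z : SixFold k P Q X Y ⧸ sixRel k R S P Q X Y),
        F (lactL r z) = lactR r (F z) ∧ F (ractL r z) = ractR r (F z)) := by
  let t : P ⊗[k] Q := ∑ j, pJ j ⊗ₜ qJ j
  have ht : TensorProduct.lift φ t = 1 := by
    simp only [t, map_sum, TensorProduct.lift.tmul, hJ]
  let e := contractMiddleEquiv (X := X) (Y := Y) hφl hφr hφker ht
  have hmk := contractMiddleEquiv_mk_tmul (X := X) (Y := Y) hφl hφr hφker ht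
  have hleft (r : R) : e ∘ₗ lactL r = lactR r ∘ₗ e :=
    sixFold_quotient_ext fun q x p q' y p' => by
      simp only [LinearMap.comp_apply, LinearEquiv.coe_coe, e, hlactL, hmk, hlactR]
  have hright (r : R) : e ∘ₗ ractL r = ractR r ∘ₗ e :=
    sixFold_quotient_ext fun q x p q' y p' => by
      simp only [LinearMap.comp_apply, LinearEquiv.coe_coe, e, hractL, hmk, hractR]
  refine ⟨e, e.symm, hmk, fun q x y p => ?_, e.comp_symm, e.symm_comp,
    fun r z => ⟨LinearMap.congr_fun (hleft r) z, LinearMap.congr_fun (hright r) z⟩⟩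
  rw [LinearEquiv.coe_coe, contractMiddleEquiv_symm_mk]
  simp only [t, map_sum, LinearMap.sum_apply, insertMiddle_tmul, ← Submodule.mkQ_apply]

/-- Let `(R, S, P, Q, φ, ψ)` be a Morita context over `k`, and let `X` and
`Y` be `(S,S)`-bimodules with symmetric `k`-action.  Then the assignment
`(q ⊗ x ⊗ p) ⊗ (q' ⊗ y ⊗ p') ↦ q ⊗ (x·φ(p ⊗ q') ⊗ y) ⊗ p'` defines a well-defined
isomorphism of `(R,R)`-bimodules
`(Q ⊗_S X ⊗_S P) ⊗_R (Q ⊗_S Y ⊗_S P) → Q ⊗_S (X ⊗_S Y) ⊗_S P`, with inverse given by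
`q ⊗ (x ⊗ y) ⊗ p ↦ Σ_j (q ⊗ x ⊗ p'_j) ⊗ (q'_j ⊗ y ⊗ p)`; the `(R,R)`-bimodule structures
`r·(q ⊗ ⋯ ⊗ p)·r' = (r·q) ⊗ ⋯ ⊗ (p·r')` are given by the (characterized) action maps
below, and the balanced tensor products are realized as quotients of `k`-tensor products
by the balancing relations. -/
theorem monoidal_structure_iso
    (k R S P Q X Y : Type u) [CommRing k] [Ring R] [Ring S] [Algebra k R] [Algebra k S]
    [AddCommGroup P] [Module k P] [Module S P] [Module Rᵐᵒᵖ P]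
    [SMulCommClass S Rᵐᵒᵖ P] [IsScalarTower k S P] [IsScalarTower k Rᵐᵒᵖ P]
    [AddCommGroup Q] [Module k Q] [Module R Q] [Module Sᵐᵒᵖ Q]
    [SMulCommClass R Sᵐᵒᵖ Q] [IsScalarTower k R Q] [IsScalarTower k Sᵐᵒᵖ Q]
    [AddCommGroup X] [Module k X] [Module S X] [Module Sᵐᵒᵖ X]
    [SMulCommClass S Sᵐᵒᵖ X] [IsScalarTower k S X] [IsScalarTower k Sᵐᵒᵖ X]
    [AddCommGroup Y] [Module k Y] [Module S Y] [Module Sᵐᵒᵖ Y]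
    [SMulCommClass S Sᵐᵒᵖ Y] [IsScalarTower k S Y] [IsScalarTower k Sᵐᵒᵖ Y]
    (ctx : MoritaContext k R S P Q)
    (κ : Type u) [Fintype κ] (pJ : κ → P) (qJ : κ → Q)
    (hJ : ∑ j : κ, ctx.φ (pJ j) (qJ j) = 1)
    -- the `(R,R)`-bimodule actions on the two balanced tensor products
    (lactL : R →ₗ[k] (SixFold k P Q X Y ⧸ sixRel k R S P Q X Y)
      →ₗ[k] (SixFold k P Q X Y ⧸ sixRel k R S P Q X Y))
    (hlactL : ∀ (r : R) (q : Q) (x : X) (p : P) (q' : Q) (y : Y) (p' : P),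
      lactL r (Submodule.Quotient.mk
          (q ⊗ₜ[k] (x ⊗ₜ[k] (p ⊗ₜ[k] (q' ⊗ₜ[k] (y ⊗ₜ[k] p'))))))
        = Submodule.Quotient.mk
            ((r • q) ⊗ₜ[k] (x ⊗ₜ[k] (p ⊗ₜ[k] (q' ⊗ₜ[k] (y ⊗ₜ[k] p'))))))
    (ractL : R →ₗ[k] (SixFold k P Q X Y ⧸ sixRel k R S P Q X Y)
      →ₗ[k] (SixFold k P Q X Y ⧸ sixRel k R S P Q X Y))
    (hractL : ∀ (r : R) (q : Q) (x : X) (p : P) (q' : Q) (y : Y) (p' : P),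
      ractL r (Submodule.Quotient.mk
          (q ⊗ₜ[k] (x ⊗ₜ[k] (p ⊗ₜ[k] (q' ⊗ₜ[k] (y ⊗ₜ[k] p'))))))
        = Submodule.Quotient.mk
            (q ⊗ₜ[k] (x ⊗ₜ[k] (p ⊗ₜ[k] (q' ⊗ₜ[k] (y ⊗ₜ[k] (op r • p')))))))
    (lactR : R →ₗ[k] (ThreeFold k P Q X Y ⧸ threeRel k S P Q X Y)
      →ₗ[k] (ThreeFold k P Q X Y ⧸ threeRel k S P Q X Y))
    (hlactR : ∀ (r : R) (q : Q) (x : X) (y : Y) (p : P),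
      lactR r (Submodule.Quotient.mk (q ⊗ₜ[k] ((x ⊗ₜ[k] y) ⊗ₜ[k] p)))
        = Submodule.Quotient.mk ((r • q) ⊗ₜ[k] ((x ⊗ₜ[k] y) ⊗ₜ[k] p)))
    (ractR : R →ₗ[k] (ThreeFold k P Q X Y ⧸ threeRel k S P Q X Y)
      →ₗ[k] (ThreeFold k P Q X Y ⧸ threeRel k S P Q X Y))
    (hractR : ∀ (r : R) (q : Q) (x : X) (y : Y) (p : P),
      ractR r (Submodule.Quotient.mk (q ⊗ₜ[k] ((x ⊗ₜ[k] y) ⊗ₜ[k] p)))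
        = Submodule.Quotient.mk (q ⊗ₜ[k] ((x ⊗ₜ[k] y) ⊗ₜ[k] (op r • p)))) :
    ∃ (F : (SixFold k P Q X Y ⧸ sixRel k R S P Q X Y)
        →ₗ[k] (ThreeFold k P Q X Y ⧸ threeRel k S P Q X Y))
      (G : (ThreeFold k P Q X Y ⧸ threeRel k S P Q X Y)
        →ₗ[k] (SixFold k P Q X Y ⧸ sixRel k R S P Q X Y)),
      (∀ (q : Q) (x : X) (p : P) (q' : Q) (y : Y) (p' : P),
        F (Submodule.Quotient.mk
            (q ⊗ₜ[k] (x ⊗ₜ[k] (p ⊗ₜ[k] (q' ⊗ₜ[k] (y ⊗ₜ[k] p'))))))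
          = Submodule.Quotient.mk
              (q ⊗ₜ[k] (((op (ctx.φ p q') • x) ⊗ₜ[k] y) ⊗ₜ[k] p'))) ∧
      (∀ (q : Q) (x : X) (y : Y) (p : P),
        G (Submodule.Quotient.mk (q ⊗ₜ[k] ((x ⊗ₜ[k] y) ⊗ₜ[k] p)))
          = ∑ j : κ, Submodule.Quotient.mk
              (q ⊗ₜ[k] (x ⊗ₜ[k] (pJ j ⊗ₜ[k] (qJ j ⊗ₜ[k] (y ⊗ₜ[k] p)))))) ∧
      F.comp G = LinearMap.id ∧ G.comp F = LinearMap.id ∧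
      (∀ (r : R) (z : SixFold k P Q X Y ⧸ sixRel k R S P Q X Y),
        F (lactL r z) = lactR r (F z) ∧ F (ractL r z) = ractR r (F z)) := by
  exact monoidal_structure_iso_general ctx.φ_left ctx.φ_right ctx.φ_ker hJ
    hlactL hractL hlactR hractR
end

section
/- Let N ≥ 1 and let q ∈ ℂ be a primitive N-th root of unity. With U₀ the N×N cyclic shift matrix ((U₀)_{i,j} = 1 if j ≡ i+1 mod N, else 0) and V₀ the diagonal matrix with (V₀)_{i,i} = q^i, the family of N² matrices (U₀^a · V₀^b) for 0 ≤ a, b < N is a ℂ-vector space basis of the algebra of N×N complex matrices; in particular, the matrix algebra M_N(ℂ) is generated as a ℂ-algebra by U₀ and V₀. -/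
/-
The powers `P ^ a`, `a < n`, of the permutation matrix `P` of an `n`-cycle have disjoint supports.
Hence a vanishing combination of the `P ^ a * D ^ b`, with `D` diagonal, splits into vanishing
combinations of the `D ^ b`, one for each `a`, and the powers `D ^ b`, `b < n`, are independent by
Vandermonde when the diagonal entries of `D` are distinct. Finally, `n ^ 2` independent matrices
span the matrix algebra.
-/

open Equiv.Perm Matrix

section PermMatrix

variable {n R : Type*} [DecidableEq n]

theorem permMatrix_apply [Zero R] [One R] (σ : Equiv.Perm n) (i j : n) :
    σ.permMatrix R i j = if σ i = j then 1 else 0 := by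
  rw [Equiv.Perm.permMatrix, PEquiv.toMatrix_apply]
  simp only [Equiv.toPEquiv_apply, Option.mem_some_iff]

variable [Fintype n]

theorem permMatrix_pow [Semiring R] (σ : Equiv.Perm n) (a : ℕ) :
    (σ ^ a).permMatrix R = σ.permMatrix R ^ a := by
  induction a with
  | zero => exact permMatrix_one
  | succ a ih => rw [pow_succ', permMatrix_mul, ih, pow_succ]

theorem permMatrix_mul_diagonal_apply [Semiring R] (σ : Equiv.Perm n) (v : n → R) (i j : n) :
    (σ.permMatrix R * diagonal v) i j = if σ i = j then v j else 0 := by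
  rw [mul_diagonal, permMatrix_apply, ite_mul, one_mul, zero_mul]

theorem linearIndependent_permMatrix_mul_diagonal [Ring R] {ι κ : Type*} [Finite ι] [Finite κ]
    {σ : ι → Equiv.Perm n} (hσ : ∀ i, Function.Injective fun a => σ a i)
    {v : κ → n → R} (hv : LinearIndependent R v) :
    LinearIndependent R fun ab : ι × κ => (σ ab.1).permMatrix R * diagonal (v ab.2) := by
  cases nonempty_fintype ι
  cases nonempty_fintype κ
  rw [Fintype.linearIndependent_iff] at hv ⊢
  rintro c hc ⟨a, b⟩
  refine hv (fun b => c (a, b)) (funext fun j => ?_) b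
  obtain ⟨i, rfl⟩ := (σ a).surjective j
  -- Only the summands with first index `a` contribute to the entry `(i, σ a i)`.
  have hentry := congrFun (congrFun hc i) (σ a i)
  have hother (a' : ι) (ha' : a' ≠ a) (b : κ) :
      ((σ a').permMatrix R * diagonal (v b)) i (σ a i) = 0 := by
    rw [permMatrix_mul_diagonal_apply, if_neg ((hσ i).ne ha')]
  rw [Matrix.sum_apply, Fintype.sum_prod_type, Fintype.sum_eq_single a fun a' ha' =>
    Finset.sum_eq_zero fun b _ => by rw [Matrix.smul_apply, hother a' ha' b, smul_zero]] at hentry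
  simpa only [Matrix.smul_apply, permMatrix_mul_diagonal_apply, if_true, Finset.sum_apply,
    Pi.smul_apply, Matrix.zero_apply, Pi.zero_apply] using hentry

end PermMatrix

theorem linearIndependent_pow_of_injective {n R : Type*} [Fintype n] [CommRing R] [IsDomain R]
    {N : ℕ} (hN : Fintype.card n = N) {d : n → R} (hd : Function.Injective d) :
    LinearIndependent R fun b : Fin N => d ^ (b : ℕ) := by
  rw [Fintype.linearIndependent_iff]
  intro c hc
  refine congrFun (eq_zero_of_forall_index_sum_mul_pow_eq_zero
    (hd.comp (Fintype.equivFinOfCardEq hN).symm.injective) fun j => ?_)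
  simpa using congrFun hc ((Fintype.equivFinOfCardEq hN).symm j)

theorem injective_pow_apply_of_isCycleOn_univ {n : Type*} [Fintype n] {N : ℕ}
    (hN : Fintype.card n = N) {σ : Equiv.Perm n} (hσ : σ.IsCycleOn Set.univ) (i : n) :
    Function.Injective fun a : Fin N => (σ ^ (a : ℕ)) i := by
  intro a b hab
  rw [← Finset.coe_univ] at hσ
  have hmod : (a : ℕ) ≡ b [MOD N] := by
    simpa only [Finset.card_univ, hN] using
      (hσ.pow_apply_eq_pow_apply (Finset.mem_univ i)).mp hab
  exact Fin.ext (hmod.eq_of_lt_of_lt a.isLt b.isLt)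

theorem linearIndependent_permMatrix_pow_mul_diagonal_pow {n R : Type*} [Fintype n]
    [DecidableEq n] [CommRing R] [IsDomain R] {N : ℕ} (hN : Fintype.card n = N)
    {σ : Equiv.Perm n} (hσ : σ.IsCycleOn Set.univ) {d : n → R} (hd : Function.Injective d) :
    LinearIndependent R fun ab : Fin N × Fin N =>
      σ.permMatrix R ^ (ab.1 : ℕ) * diagonal d ^ (ab.2 : ℕ) := by
  simpa only [permMatrix_pow, diagonal_pow] using
    linearIndependent_permMatrix_mul_diagonal (injective_pow_apply_of_isCycleOn_univ hN hσ)
      (linearIndependent_pow_of_injective hN hd)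

theorem adjoin_pair_eq_top_of_span_pow_mul_pow_eq_top {R A ι : Type*} [CommSemiring R]
    [Semiring A] [Algebra R A] {x y : A} {k l : ι → ℕ}
    (h : Submodule.span R (Set.range fun i => x ^ k i * y ^ l i) = ⊤) :
    Algebra.adjoin R {x, y} = ⊤ := by
  rw [← Algebra.toSubmodule_eq_top, eq_top_iff, ← h, Submodule.span_le]
  rintro _ ⟨i, rfl⟩
  have hx : x ∈ Algebra.adjoin R {x, y} := Algebra.subset_adjoin (Set.mem_insert x {y})
  have hy : y ∈ Algebra.adjoin R {x, y} := Algebra.subset_adjoin (Set.mem_insert_of_mem x rfl)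
  exact Subalgebra.mul_mem _ (Subalgebra.pow_mem _ hx _) (Subalgebra.pow_mem _ hy _)

theorem isCycleOn_finRotate_univ (N : ℕ) : (finRotate N).IsCycleOn Set.univ := by
  rcases lt_or_ge N 2 with hN | hN
  · have : Subsingleton (Fin N) := Fin.subsingleton_iff_le_one.mpr (Nat.le_of_lt_succ hN)
    exact isCycleOn_of_subsingleton _ _
  · simpa only [← Finset.coe_univ, ← support_finRotate_of_le hN, coe_support_eq_set_support] using
      (isCycle_finRotate_of_le hN).isCycleOn

theorem permMatrix_finRotate_apply {R : Type*} [Zero R] [One R] {N : ℕ} (i j : Fin N) :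
    (finRotate N).permMatrix R i j = if (j : ℕ) = ((i : ℕ) + 1) % N then 1 else 0 := by
  have : NeZero N := i.neZero
  have hval : (finRotate N i : ℕ) = ((i : ℕ) + 1) % N := by
    rw [finRotate_apply, Fin.val_add, Fin.val_one', Nat.add_mod_mod]
  simp only [permMatrix_apply, ← hval, Fin.ext_iff, eq_comm]

theorem shift_clock_matrices_basis_general {n K : Type*} [Fintype n] [DecidableEq n] [Field K]
    {N : ℕ} (hN : Fintype.card n = N) {σ : Equiv.Perm n} (hσ : σ.IsCycleOn Set.univ)
    {d : n → K} (hd : Function.Injective d) :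
    LinearIndependent K (fun ab : Fin N × Fin N =>
      σ.permMatrix K ^ (ab.1 : ℕ) * diagonal d ^ (ab.2 : ℕ)) ∧
    Submodule.span K (Set.range fun ab : Fin N × Fin N =>
      σ.permMatrix K ^ (ab.1 : ℕ) * diagonal d ^ (ab.2 : ℕ)) = ⊤ ∧
    Algebra.adjoin K {σ.permMatrix K, diagonal d} = ⊤ := by
  have hli := linearIndependent_permMatrix_pow_mul_diagonal_pow hN hσ hd
  have hcard : Fintype.card (Fin N × Fin N) = Module.finrank K (Matrix n n K) := by
    simp [Module.finrank_matrix, hN]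
  have hspan := hli.span_eq_top_of_card_eq_finrank' hcard
  exact ⟨hli, hspan, adjoin_pair_eq_top_of_span_pow_mul_pow_eq_top hspan⟩

/-- Let `N ≥ 1` and let `q ∈ ℂ` be a primitive `N`-th root of unity.  With
`U₀` the `N × N` cyclic shift matrix and `V₀` the diagonal matrix with entries `q ^ i`, the
family of `N²` matrices `U₀ ^ a * V₀ ^ b`, `0 ≤ a, b < N`, is a `ℂ`-vector space basis of the
algebra of `N × N` complex matrices (it is linearly independent and spans); in particular the
matrix algebra `M_N(ℂ)` is generated as a `ℂ`-algebra by `U₀` and `V₀`. -/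
theorem shift_clock_matrices_basis (N : ℕ) (hN : 1 ≤ N) (q : ℂ) (hq : IsPrimitiveRoot q N)
    (U₀ V₀ : Matrix (Fin N) (Fin N) ℂ)
    (hU : ∀ i j : Fin N, U₀ i j = if (j : ℕ) = ((i : ℕ) + 1) % N then 1 else 0)
    (hV : V₀ = Matrix.diagonal fun i : Fin N => q ^ (i : ℕ)) :
    LinearIndependent ℂ (fun ab : Fin N × Fin N => U₀ ^ (ab.1 : ℕ) * V₀ ^ (ab.2 : ℕ)) ∧
    Submodule.span ℂ
      (Set.range fun ab : Fin N × Fin N => U₀ ^ (ab.1 : ℕ) * V₀ ^ (ab.2 : ℕ)) = ⊤ ∧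
    Algebra.adjoin ℂ {U₀, V₀} = ⊤ := by
  obtain rfl : U₀ = (finRotate N).permMatrix ℂ :=
    Matrix.ext fun i j => (hU i j).trans (permMatrix_finRotate_apply i j).symm
  subst hV
  exact shift_clock_matrices_basis_general (Fintype.card_fin N) (isCycleOn_finRotate_univ N)
    fun i j hij => Fin.ext (hq.pow_inj i.isLt j.isLt hij)
end
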